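/- arXiv:math/0611901 — 3 statements merged into one kernel-verified Lean document; each statement's English description precedes it below -/
import Mathlib

section
/- Let n ≥ 1 and n/(n+1) < q < p ≤ 1, fix ψ as in the context, and let Ω ⊆ ℝⁿ be a bounded domain whose complement is thick in the sense of (n−q)-Hausdorff content, i.e. there is c > 0 such that H^{n−q}_∞( Ωᶜ ∩ B(x,r) ) ≥ c·r^{n−q} for every x ∈ Ωᶜ and every r > 0. Then there is a finite constant C = C(p,q,n,c,Ω,ψ) such that every smooth u : ℝⁿ → ℝ with compact support contained in Ω satisfies ∫_Ω ( |u(x)| / dist(x,∂Ω) )^p dx ≤ C · Σ_{j=1}^n ‖ sup_{t>0} |(∂_j u) * ψ_t| ‖_{L^p(ℝⁿ)}^p. -/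
open MeasureTheory Metric Set ENNReal NNReal

noncomputable section

/-- The partial derivative `∂_j φ` in the `j`-th coordinate direction. -/
def pderivIdx (n : ℕ) (j : Fin n) (φ : EuclideanSpace ℝ (Fin n) → ℝ)
    (x : EuclideanSpace ℝ (Fin n)) : ℝ :=
  fderiv ℝ φ x (EuclideanSpace.single j 1)

/-- `sup_{t>0} |(∂_j u) * ψ_t|(x)`, the smooth maximal function of the partial
derivative of a differentiable function `u`, where `ψ_t(z) = t^{-n} ψ(z/t)`. -/
def convMax (n : ℕ) (ψ u : EuclideanSpace ℝ (Fin n) → ℝ) (j : Fin n)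
    (x : EuclideanSpace ℝ (Fin n)) : ℝ≥0∞ :=
  ⨆ (t : {s : ℝ // 0 < s}),
    ENNReal.ofReal |∫ y, pderivIdx n j u y * ((t.1⁻¹) ^ n * ψ (t.1⁻¹ • (x - y)))|

/-- The `s`-Hausdorff content `H^s_∞(A)`, defined via countable coverings by balls. -/
def hContent (n : ℕ) (s : ℝ) (A : Set (EuclideanSpace ℝ (Fin n))) : ℝ≥0∞ :=
  sInf {r : ℝ≥0∞ | ∃ (x : ℕ → EuclideanSpace ℝ (Fin n)) (ρ : ℕ → ℝ),
    (∀ k, 0 < ρ k) ∧ A ⊆ ⋃ k, ball (x k) (ρ k) ∧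
    r = ∑' k, ENNReal.ofReal (ρ k ^ s)}

/-!
The classical pointwise Hardy inequality bounds `|u x| / dist (x, ∂Ω)` by a Hardy–Littlewood
maximal function of `|∇u| ^ q`, which is useless for exponents at most `1`: the Hardy space norm
does not see `|∇u|`, only the averages `ψ_t * ∇u`. The gradient is therefore measured by the
tangential maximal function `T = sup_{y, t} |(ψ_t * ∇u) y| / (1 + |x - y| / t) ^ N`, which
controls convolutions of `∇u` with every smooth bump, not only with `ψ`, and hence increments of
`u`.

Let `d` be the distance of `x` to the boundary. Either `|u x| / d ≲ T x`, or
`|ψ_d * u| ≥ |u x| / 2` around `x`. In the latter case, at each complement point `z` near `x` the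
function `t ↦ (ψ_t * u) z` grows from `u z = 0` at `t = 0` to `|u x| / 2` at `t = d`, so at some
scale `θ ∈ (0, d)` it grows fast and `T ^ r` is at least about `(|u x| / d) ^ r * (θ / d) ^ (-q)`
on the ball `B(z, θ)`, for any `r > q`. These balls cover the complement near `x`, whose
`(n - q)`-content is at least `c d ^ (n - q)`; summing over a Vitali subfamily yields
`(|u x| / d) ^ r ≲ M (T ^ r) x`. For `q < r < p` the maximal theorem with exponent `p / r > 1`
integrates this to `∫ (|u| / d) ^ p ≲ ∫ T ^ p`, and the comparison of the tangential and radial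
maximal functions finishes the proof.
-/

section Dilation

variable {E : Type*} [NormedAddCommGroup E] [NormedSpace ℝ E]

/-- The dilated kernel `K_t = t^{-n} K(·/t)`, where `n` is the dimension of the space. -/
def dilation (K : E → ℝ) (t : ℝ) (w : E) : ℝ :=
  t⁻¹ ^ Module.finrank ℝ E * K (t⁻¹ • w)

theorem continuous_dilation {K : E → ℝ} (hK : Continuous K) (t : ℝ) :
    Continuous (dilation K t) := by
  unfold dilation
  fun_prop

theorem hasCompactSupport_dilation {K : E → ℝ} (hK : HasCompactSupport K) {t : ℝ} (ht : t ≠ 0) :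
    HasCompactSupport (dilation K t) :=
  (hK.comp_homeomorph (Homeomorph.smulOfNeZero t⁻¹ (inv_ne_zero ht))).mul_left

theorem contDiff_dilation {K : E → ℝ} {m : WithTop ℕ∞} (hK : ContDiff ℝ m K) (t : ℝ) :
    ContDiff ℝ m (dilation K t) := by
  unfold dilation
  fun_prop

theorem fderiv_dilation_apply (K : E → ℝ) (t : ℝ) (w v : E) :
    fderiv ℝ (dilation K t) w v = t⁻¹ * dilation (fun z => fderiv ℝ K z v) t w := by
  have hK : fderiv ℝ (dilation K t) w = t⁻¹ ^ Module.finrank ℝ E • t⁻¹ • fderiv ℝ K (t⁻¹ • w) := by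
    rw [← fderiv_comp_smul]
    exact congrFun (fderiv_const_smul_field (t⁻¹ ^ Module.finrank ℝ E)) w
  rw [hK, dilation]
  simp only [smul_apply, smul_eq_mul]
  ring

end Dilation

section Averages

theorem integrable_smul_of_hasCompactSupport {X F : Type*} [TopologicalSpace X] [MeasurableSpace X]
    [OpensMeasurableSpace X] {μ : Measure X} [IsFiniteMeasureOnCompacts μ] [NormedAddCommGroup F]
    [NormedSpace ℝ F] {K : X → ℝ} (hK : Continuous K) (hKc : HasCompactSupport K) {f : X → F}
    (hf : Continuous f) : Integrable (fun w => K w • f w) μ :=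
  (hK.smul hf).integrable_of_hasCompactSupport hKc.smul_right

variable {E F : Type*} [NormedAddCommGroup E] [NormedSpace ℝ E] [MeasureSpace E]
  [NormedAddCommGroup F] [NormedSpace ℝ F]

/-- The average `y ↦ ∫ K(w) f(y - t w) dw` of `f` at scale `t` against the kernel `K`. For `t > 0`
it is the convolution `f * K_t` with `K_t = t^{-n} K(·/t)`; this form also makes sense at `t = 0`,
where it is `(∫ K) f`. -/
def scaledConv (K : E → ℝ) (f : E → F) (t : ℝ) (y : E) : F :=
  ∫ w, K w • f (y - t • w)

theorem scaledConv_zero [CompleteSpace F] {K : E → ℝ} (hK : ∫ w, K w = 1) (f : E → F) (y : E) :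
    scaledConv K f 0 y = f y := by
  simp [scaledConv, integral_smul_const, hK]

theorem support_scaledConv_subset {K : E → ℝ} {f : E → F} {r R t : ℝ}
    (hK : Function.support K ⊆ closedBall 0 r) (hf : Function.support f ⊆ closedBall 0 R)
    (ht : 0 ≤ t) : Function.support (scaledConv K f t) ⊆ closedBall 0 (R + t * r) := by
  refine Function.support_subset_iff'.2 fun z hz => integral_eq_zero_of_ae (ae_of_all _ fun w => ?_)
  by_contra hne
  obtain ⟨hKw, hfw⟩ : K w ≠ 0 ∧ f (z - t • w) ≠ 0 := smul_ne_zero_iff.1 hne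
  have hw : ‖w‖ ≤ r := by simpa using hK hKw
  have hzw : ‖z - t • w‖ ≤ R := by simpa using hf hfw
  refine hz (mem_closedBall_zero_iff.2 ?_)
  calc ‖z‖ = ‖(z - t • w) + t • w‖ := by rw [sub_add_cancel]
    _ ≤ R + t * r := by
      refine (norm_add_le _ _).trans ?_
      rw [norm_smul, Real.norm_of_nonneg ht]
      gcongr

theorem dilation_scaledConv (K L : E → ℝ) (ε : ℝ) {t : ℝ} (ht : t ≠ 0) :
    dilation (scaledConv L K ε) t = scaledConv L (dilation K t) (ε * t) := by
  ext z
  simp only [dilation, scaledConv, ← integral_const_mul, smul_eq_mul]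
  congr 1 with w
  rw [mul_left_comm, smul_sub, smul_smul, mul_comm ε, inv_mul_cancel_left₀ ht]

variable [BorelSpace E] [(volume : Measure E).IsAddHaarMeasure]

theorem scaledConv_sub_left {K L : E → ℝ} (hK : Continuous K) (hKc : HasCompactSupport K)
    (hL : Continuous L) (hLc : HasCompactSupport L) {f : E → F} (hf : Continuous f)
    (t : ℝ) (y : E) :
    scaledConv (fun w => K w - L w) f t y = scaledConv K f t y - scaledConv L f t y := by
  simp only [scaledConv, sub_smul]
  exact integral_sub (integrable_smul_of_hasCompactSupport hK hKc (by fun_prop))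
    (integrable_smul_of_hasCompactSupport hL hLc (by fun_prop))

theorem norm_scaledConv_le {K : E → ℝ} (hK : Continuous K) (hKc : HasCompactSupport K) {f : E → F}
    {B : ℝ} (hB : ∀ z, ‖f z‖ ≤ B) (t : ℝ) (y : E) :
    ‖scaledConv K f t y‖ ≤ (∫ w, |K w|) * B := by
  rw [scaledConv, ← integral_mul_const]
  refine norm_integral_le_of_norm_le
    ((hK.abs.integrable_of_hasCompactSupport hKc.norm).mul_const B) (ae_of_all _ fun w => ?_)
  rw [norm_smul, Real.norm_eq_abs]
  gcongr
  exact hB _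

theorem scaledConv_fderiv_apply {K : E → ℝ} (hK : Continuous K)
    (hKc : HasCompactSupport K) {f : E → F} (hf : ContDiff ℝ 1 f) (t : ℝ) (y v : E) :
    scaledConv K (fderiv ℝ f) t y v = scaledConv K (fun z => fderiv ℝ f z v) t y := by
  have := hf.continuous_fderiv one_ne_zero
  exact ContinuousLinearMap.integral_apply
    (integrable_smul_of_hasCompactSupport hK hKc (by fun_prop)) v

variable [FiniteDimensional ℝ E]

theorem scaledConv_eq_convolution (K : E → ℝ) (f : E → F) {t : ℝ} (ht : 0 < t) :
    scaledConv K f t =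
      convolution (dilation K t) f (ContinuousLinearMap.lsmul ℝ ℝ) volume := by
  ext y
  have hscale := Measure.integral_comp_inv_smul_of_nonneg (volume : Measure E)
    (fun w => K w • f (y - t • w)) ht.le
  simp only [smul_inv_smul₀ ht.ne'] at hscale
  simp only [convolution_def, ContinuousLinearMap.lsmul_apply, dilation, mul_smul, integral_smul]
  rw [hscale, smul_smul, ← mul_pow, inv_mul_cancel₀ ht.ne', one_pow, one_smul, scaledConv]

theorem scaledConv_eq_integral_dilation_sub (K : E → ℝ) (f : E → F) {t : ℝ} (ht : 0 < t) (y : E) :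
    scaledConv K f t y = ∫ z, dilation K t (y - z) • f z := by
  rw [scaledConv_eq_convolution K f ht, convolution_lsmul_swap]

theorem continuous_scaledConv {K : E → ℝ} (hK : Continuous K) (hKc : HasCompactSupport K)
    {f : E → F} (hf : Continuous f) {t : ℝ} (ht : 0 < t) : Continuous (scaledConv K f t) := by
  rw [scaledConv_eq_convolution K f ht]
  exact (hasCompactSupport_dilation hKc ht.ne').continuous_convolution_left _
    (continuous_dilation hK t) hf.locallyIntegrable

theorem contDiff_scaledConv {K f : E → ℝ} (hK : Continuous K) {m : ℕ∞} (hf : ContDiff ℝ m f)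
    (hfc : HasCompactSupport f) {t : ℝ} (ht : 0 < t) : ContDiff ℝ m (scaledConv K f t) := by
  rw [scaledConv_eq_convolution K f ht]
  exact hfc.contDiff_convolution_right _ (continuous_dilation hK t).locallyIntegrable hf

theorem fderiv_scaledConv {K f : E → ℝ} (hK : Continuous K) (hf : ContDiff ℝ 1 f)
    (hfc : HasCompactSupport f) {t : ℝ} (ht : 0 < t) :
    fderiv ℝ (scaledConv K f t) = scaledConv K (fderiv ℝ f) t := by
  ext1 y
  rw [scaledConv_eq_convolution K f ht, scaledConv_eq_convolution K _ ht,
    (hfc.hasFDerivAt_convolution_right _ (continuous_dilation hK t).locallyIntegrable hf y).fderiv]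
  rfl

theorem hasFDerivAt_scaledConv_left {K : E → ℝ} (hK : ContDiff ℝ 1 K) (hKc : HasCompactSupport K)
    {f : E → F} (hf : Continuous f) {t : ℝ} (ht : 0 < t) (y : E) :
    HasFDerivAt (scaledConv K f t) (convolution (fderiv ℝ (dilation K t)) f
      ((ContinuousLinearMap.lsmul ℝ ℝ).precompL E) volume y) y := by
  rw [scaledConv_eq_convolution K f ht]
  exact (hasCompactSupport_dilation hKc ht.ne').hasFDerivAt_convolution_left _
    (contDiff_dilation hK t) hf.locallyIntegrable y

theorem fderiv_scaledConv_apply {K : E → ℝ} (hK : ContDiff ℝ 1 K)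
    (hKc : HasCompactSupport K) {f : E → F} (hf : Continuous f) {t : ℝ} (ht : 0 < t) (y v : E) :
    fderiv ℝ (scaledConv K f t) y v = t⁻¹ • scaledConv (fun w => fderiv ℝ K w v) f t y := by
  have hdil := hasCompactSupport_dilation hKc ht.ne'
  rw [(hasFDerivAt_scaledConv_left hK hKc hf ht y).fderiv, scaledConv_eq_convolution _ _ ht,
    ← convolution_flip, ContinuousLinearMap.precompL, ContinuousLinearMap.flip_flip,
    convolution_precompR_apply _ hf.locallyIntegrable (hdil.fderiv ℝ)
      ((contDiff_dilation hK t).continuous_fderiv one_ne_zero), convolution_flip, convolution_def,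
    convolution_def, ← integral_smul]
  simp only [ContinuousLinearMap.lsmul_apply, fderiv_dilation_apply, mul_smul]

end Averages

section AverageCalculus

variable {E F : Type*} [NormedAddCommGroup E] [NormedSpace ℝ E] [MeasureSpace E] [BorelSpace E]
  [(volume : Measure E).IsAddHaarMeasure] [NormedAddCommGroup F] [NormedSpace ℝ F]

theorem hasDerivAt_scaledConv_scale [FiniteDimensional ℝ E] {K : E → ℝ}
    (hK : Continuous K) (hKc : HasCompactSupport K) {f : E → F} (hf : ContDiff ℝ 1 f) {B : ℝ}
    (hB : ∀ z, ‖fderiv ℝ f z‖ ≤ B) (t : ℝ) (y : E) :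
    HasDerivAt (fun s => scaledConv K f s y) (∫ w, K w • fderiv ℝ f (y - t • w) (-w)) t := by
  have := hf.continuous_fderiv one_ne_zero
  refine (hasDerivAt_integral_of_dominated_loc_of_deriv_le (bound := fun w => |K w| • (B * ‖w‖))
    (F' := fun s w => K w • fderiv ℝ f (y - s • w) (-w)) Filter.univ_mem
    (.of_forall fun s => by apply Continuous.aestronglyMeasurable; fun_prop)
    (integrable_smul_of_hasCompactSupport hK hKc (by fun_prop))
    (by apply Continuous.aestronglyMeasurable; fun_prop) (ae_of_all _ fun w s _ => ?_)
    (integrable_smul_of_hasCompactSupport hK.abs hKc.norm (by fun_prop))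
    (ae_of_all _ fun w s _ => ?_)).2
  · rw [norm_smul, Real.norm_eq_abs, smul_eq_mul]
    gcongr
    refine ((fderiv ℝ f _).le_opNorm _).trans ?_
    rw [norm_neg]
    gcongr
    exact hB _
  · have hline : HasDerivAt (fun s : ℝ => y - s • w) (-w) s := by
      simpa using ((hasDerivAt_id s).smul_const w).const_sub y
    exact ((hf.differentiable one_ne_zero _).hasFDerivAt.comp_hasDerivAt s hline).const_smul _

theorem integral_smul_fderiv_apply_neg_eq_sum [FiniteDimensional ℝ E] {ι : Type*}
    [Fintype ι] (b : Module.Basis ι ℝ E) {K : E → ℝ} (hK : Continuous K) (hKc : HasCompactSupport K)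
    {f : E → F} (hf : ContDiff ℝ 1 f) (t : ℝ) (y : E) :
    ∫ w, K w • fderiv ℝ f (y - t • w) (-w) =
      -∑ i, scaledConv (fun w => b.coord i w * K w) (fderiv ℝ f) t y (b i) := by
  have := hf.continuous_fderiv one_ne_zero
  have hcoord : ∀ i, Continuous fun w => b.coord i w * K w := fun i =>
    (b.coord i).continuous_of_finiteDimensional.mul hK
  simp only [scaledConv_fderiv_apply (hcoord _) hKc.mul_left hf]
  simp only [scaledConv]
  rw [← integral_finsetSum _ fun i _ =>
    integrable_smul_of_hasCompactSupport (hcoord i) hKc.mul_left (by fun_prop), ← integral_neg]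
  congr 1 with w
  calc K w • fderiv ℝ f (y - t • w) (-w)
    _ = -(K w • fderiv ℝ f (y - t • w) (∑ i, b.repr w i • b i)) := by
      rw [b.sum_repr, map_neg, smul_neg]
    _ = -∑ i, (b.coord i w * K w) • fderiv ℝ f (y - t • w) (b i) := by
      simp only [map_sum, map_smul, Finset.smul_sum, Module.Basis.coord_apply, smul_smul, mul_comm]

theorem scaledConv_scaledConv [FiniteDimensional ℝ E] [CompleteSpace F] {K L : E → ℝ}
    (hK : Continuous K) (hKc : HasCompactSupport K) (hL : Continuous L) (hLc : HasCompactSupport L)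
    {f : E → F} (hf : Continuous f) {ε t : ℝ} (hε : 0 < ε) (ht : 0 < t) :
    scaledConv (scaledConv L K ε) f t = scaledConv K (scaledConv L f (ε * t)) t := by
  have hεt : 0 < ε * t := mul_pos hε ht
  have hdK := continuous_dilation hK t
  have hdL := continuous_dilation hL (ε * t)
  have hdKc := hasCompactSupport_dilation hKc ht.ne'
  have hdLc := hasCompactSupport_dilation hLc hεt.ne'
  have hcomm : convolution (dilation L (ε * t)) (dilation K t) (ContinuousLinearMap.lsmul ℝ ℝ)
      volume = convolution (dilation K t) (dilation L (ε * t)) (ContinuousLinearMap.lsmul ℝ ℝ)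
      volume := by
    rw [← convolution_flip]
    congr 1
    ext
    simp
  rw [scaledConv_eq_convolution _ f ht, scaledConv_eq_convolution K _ ht,
    scaledConv_eq_convolution L f hεt, dilation_scaledConv K L ε ht.ne',
    scaledConv_eq_convolution L _ hεt, hcomm]
  ext y
  exact convolution_assoc (ContinuousLinearMap.lsmul ℝ ℝ) (ContinuousLinearMap.lsmul ℝ ℝ)
    (ContinuousLinearMap.lsmul ℝ ℝ) (ContinuousLinearMap.lsmul ℝ ℝ) smul_assoc
    hdK.aestronglyMeasurable hdL.aestronglyMeasurable hf.aestronglyMeasurable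
    (ae_of_all _ (hdKc.convolutionExists_left _ hdK hdL.locallyIntegrable))
    (ae_of_all _ (hdLc.norm.convolutionExists_left _ hdL.norm hf.norm.locallyIntegrable))
    (hdKc.norm.convolutionExists_left _ hdK.norm
      (hdLc.norm.continuous_convolution_left _ hdL.norm hf.norm.locallyIntegrable).locallyIntegrable
      y)

theorem norm_sub_scaledConv_le [CompleteSpace F] {K : E → ℝ} (hK : Continuous K)
    (hKc : HasCompactSupport K) (hKint : ∫ w, K w = 1) {f : E → F} (hf : ContDiff ℝ 1 f) {B : ℝ}
    (hB : ∀ z, ‖fderiv ℝ f z‖ ≤ B) {t : ℝ} (ht : 0 ≤ t) (y : E) :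
    ‖f y - scaledConv K f t y‖ ≤ (∫ w, |K w| * ‖w‖) * (B * t) := by
  have hlip : ∀ w, ‖f y - f (y - t • w)‖ ≤ ‖w‖ * (B * t) := fun w => by
    have h := convex_univ.norm_image_sub_le_of_norm_fderiv_le (𝕜 := ℝ)
      (fun x _ => hf.differentiable one_ne_zero x) (fun x _ => hB x) (mem_univ (y - t • w))
      (mem_univ y)
    rw [_root_.sub_sub_cancel, norm_smul, Real.norm_of_nonneg ht] at h
    linarith
  have heq : f y - scaledConv K f t y = ∫ w, K w • (f y - f (y - t • w)) := by
    have := hf.continuous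
    simp only [smul_sub]
    rw [integral_sub (integrable_smul_of_hasCompactSupport hK hKc continuous_const)
      (integrable_smul_of_hasCompactSupport hK hKc (by fun_prop)), integral_smul_const, hKint,
      one_smul, scaledConv]
  rw [heq, ← integral_mul_const]
  refine norm_integral_le_of_norm_le ((integrable_smul_of_hasCompactSupport hK.abs hKc.norm
    continuous_norm).mul_const _) (ae_of_all _ fun w => ?_)
  rw [norm_smul, Real.norm_eq_abs, mul_assoc]
  gcongr
  exact hlip w

end AverageCalculus

section MollifierRemainder

variable {E : Type*} [NormedAddCommGroup E] [NormedSpace ℝ E] [MeasureSpace E]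

/-- A smooth compactly supported kernel of integral one. -/
structure IsMollifier (ψ : E → ℝ) : Prop where
  contDiff : ContDiff ℝ (⊤ : ℕ∞) ψ
  hasCompactSupport : HasCompactSupport ψ
  integral_eq_one : ∫ w, ψ w = 1

/-- What is left of `η` after convolving successively with `δ - ψ_{2^{-i}}` for `i < k`. -/
def mollifierRemainder (ψ η : E → ℝ) : ℕ → E → ℝ
  | 0 => η
  | k + 1 => fun z =>
    mollifierRemainder ψ η k z - scaledConv ψ (mollifierRemainder ψ η k) (2⁻¹ ^ k) z

variable {ψ η : E → ℝ}

theorem support_mollifierRemainder_subset {r R : ℝ} (hr : 0 ≤ r)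
    (hψ : Function.support ψ ⊆ closedBall 0 r) (hη : Function.support η ⊆ closedBall 0 R) (k : ℕ) :
    Function.support (mollifierRemainder ψ η k) ⊆ closedBall 0 (R + 2 * r * (1 - 2⁻¹ ^ k)) := by
  induction k with
  | zero => simpa [mollifierRemainder] using hη
  | succ k ih =>
    have hpow : (0 : ℝ) < 2⁻¹ ^ k := by positivity
    have hconv := support_scaledConv_subset hψ ih hpow.le
    refine (Function.support_sub _ _).trans
      (union_subset (ih.trans (closedBall_subset_closedBall ?_)) (hconv.trans_eq ?_))
    · rw [pow_succ]
      nlinarith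
    · congr 1
      rw [pow_succ]
      ring

theorem exists_support_mollifierRemainder_subset (hψ : HasCompactSupport ψ)
    (hη : HasCompactSupport η) :
    ∃ ρ : ℝ, 0 ≤ ρ ∧ ∀ k, Function.support (mollifierRemainder ψ η k) ⊆ closedBall 0 ρ := by
  obtain ⟨r, hr, hψr⟩ := hψ.isCompact.isBounded.subset_closedBall_lt 0 0
  obtain ⟨R, hR, hηR⟩ := hη.isCompact.isBounded.subset_closedBall_lt 0 0
  refine ⟨R + 2 * r, by positivity, fun k => ?_⟩
  refine (support_mollifierRemainder_subset hr.le ((subset_tsupport ψ).trans hψr)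
    ((subset_tsupport η).trans hηR) k).trans (closedBall_subset_closedBall ?_)
  have : (0 : ℝ) < 2⁻¹ ^ k := by positivity
  nlinarith

theorem hasCompactSupport_mollifierRemainder [FiniteDimensional ℝ E] (hψ : HasCompactSupport ψ)
    (hη : HasCompactSupport η) (k : ℕ) : HasCompactSupport (mollifierRemainder ψ η k) := by
  obtain ⟨ρ, -, hρ⟩ := exists_support_mollifierRemainder_subset hψ hη
  exact .of_support_subset_isCompact (isCompact_closedBall 0 ρ) (hρ k)

variable [BorelSpace E] [(volume : Measure E).IsAddHaarMeasure]

theorem abs_mollifierRemainder_le (hψ : IsMollifier ψ) {B : ℝ} (hB : ∀ z, |η z| ≤ B) (k : ℕ)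
    (z : E) : |mollifierRemainder ψ η k z| ≤ B * (1 + ∫ w, |ψ w|) ^ k := by
  induction k generalizing z with
  | zero => simpa [mollifierRemainder] using hB z
  | succ k ih =>
    have hconv := norm_scaledConv_le (f := mollifierRemainder ψ η k) hψ.contDiff.continuous
      hψ.hasCompactSupport ih (2⁻¹ ^ k) z
    calc |mollifierRemainder ψ η (k + 1) z|
      _ ≤ B * (1 + ∫ w, |ψ w|) ^ k + (∫ w, |ψ w|) * (B * (1 + ∫ w, |ψ w|) ^ k) :=
        (abs_sub _ _).trans (add_le_add (ih z) hconv)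
      _ = B * (1 + ∫ w, |ψ w|) ^ (k + 1) := by ring

variable [FiniteDimensional ℝ E]

theorem contDiff_mollifierRemainder (hψ : IsMollifier ψ) (hη : ContDiff ℝ (⊤ : ℕ∞) η)
    (hηc : HasCompactSupport η) (k : ℕ) : ContDiff ℝ (⊤ : ℕ∞) (mollifierRemainder ψ η k) := by
  induction k with
  | zero => exact hη
  | succ k ih =>
    exact ih.sub (contDiff_scaledConv hψ.contDiff.continuous ih
      (hasCompactSupport_mollifierRemainder hψ.hasCompactSupport hηc k) (by positivity))

theorem fderiv_mollifierRemainder_apply (hψ : IsMollifier ψ) (hη : ContDiff ℝ (⊤ : ℕ∞) η)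
    (hηc : HasCompactSupport η) (v : E) (k : ℕ) (z : E) :
    fderiv ℝ (mollifierRemainder ψ η k) z v =
      mollifierRemainder ψ (fun z => fderiv ℝ η z v) k z := by
  induction k generalizing z with
  | zero => rfl
  | succ k ih =>
    have hpow : (0 : ℝ) < 2⁻¹ ^ k := by positivity
    have hψ' := hψ.contDiff.continuous
    have hk := contDiff_mollifierRemainder hψ hη hηc k
    have hkc := hasCompactSupport_mollifierRemainder hψ.hasCompactSupport hηc k
    have hk1 : ContDiff ℝ 1 (mollifierRemainder ψ η k) := hk.of_le (by norm_cast)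
    have hconv := contDiff_scaledConv hψ' hk hkc hpow
    simp only [mollifierRemainder]
    rw [fderiv_fun_sub (hk1.differentiable one_ne_zero z) (hconv.differentiable (by simp) z),
      sub_apply, fderiv_scaledConv hψ' hk1 hkc hpow,
      scaledConv_fderiv_apply hψ' hψ.hasCompactSupport hk1, ih z, funext ih]

theorem exists_norm_fderiv_mollifierRemainder_le (hψ : IsMollifier ψ) {a : ℝ} (ha : 0 ≤ a)
    (hdecay : ∀ η : E → ℝ, ContDiff ℝ (⊤ : ℕ∞) η → HasCompactSupport η →
      ∃ C, 0 ≤ C ∧ ∀ k z, |mollifierRemainder ψ η k z| ≤ C * a ^ k)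
    (hη : ContDiff ℝ (⊤ : ℕ∞) η) (hηc : HasCompactSupport η) :
    ∃ D, 0 ≤ D ∧ ∀ k z, ‖fderiv ℝ (mollifierRemainder ψ η k) z‖ ≤ D * a ^ k := by
  have b := Module.finBasis ℝ E
  have hdir := fun i => hdecay (fun z => fderiv ℝ η z (b i))
    ((hη.fderiv_right (by simp)).clm_apply contDiff_const) (hηc.fderiv_apply ℝ (b i))
  choose C hC0 hC using hdir
  obtain ⟨M, hM, hop⟩ := b.exists_opNorm_le (F := ℝ)
  have hsum : 0 ≤ ∑ i, C i := Finset.sum_nonneg fun i _ => hC0 i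
  refine ⟨M * ∑ i, C i, by positivity, fun k z => ?_⟩
  rw [mul_assoc]
  refine hop (by positivity) fun i => ?_
  rw [fderiv_mollifierRemainder_apply hψ hη hηc]
  refine (hC i k z).trans ?_
  gcongr
  exact Finset.single_le_sum (fun i _ => hC0 i) (Finset.mem_univ i)

-- Convolving with `δ - ψ_{2^{-k}}` gains a factor `2^{-k}` over the gradient, whose components are
-- themselves remainders: trading `m` derivatives gains `2^{-mk}`.
theorem exists_abs_mollifierRemainder_le_div_pow (hψ : IsMollifier ψ) (m : ℕ)
    (hη : ContDiff ℝ (⊤ : ℕ∞) η) (hηc : HasCompactSupport η) :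
    ∃ C, 0 ≤ C ∧ ∀ k z, |mollifierRemainder ψ η k z| ≤ C * ((1 + ∫ w, |ψ w|) / 2 ^ m) ^ k := by
  have hψnonneg : 0 ≤ ∫ w, |ψ w| := integral_nonneg fun _ => abs_nonneg _
  induction m generalizing η with
  | zero =>
    obtain ⟨B, hB⟩ := hηc.exists_bound_of_continuous hη.continuous
    refine ⟨B, (norm_nonneg _).trans (hB 0), fun k z => ?_⟩
    simpa using abs_mollifierRemainder_le hψ hB k z
  | succ m ih =>
    set Λ := 1 + ∫ w, |ψ w|
    obtain ⟨B, hB⟩ := hηc.exists_bound_of_continuous hη.continuous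
    obtain ⟨D, hD, hgrad⟩ := exists_norm_fderiv_mollifierRemainder_le (a := Λ / 2 ^ m) hψ
      (by positivity) (fun η => ih) hη hηc
    have hB0 : 0 ≤ B := (norm_nonneg _).trans (hB 0)
    set M := ∫ w, |ψ w| * ‖w‖
    have : 0 ≤ M := integral_nonneg fun w => by positivity
    refine ⟨B + M * D * 2 ^ (m + 1), by positivity, fun k z => ?_⟩
    cases k with
    | zero =>
      simp only [mollifierRemainder, pow_zero, mul_one]
      exact (hB z).trans (le_add_of_nonneg_right (by positivity))
    | succ k =>
      have hk : ContDiff ℝ 1 (mollifierRemainder ψ η k) :=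
        (contDiff_mollifierRemainder hψ hη hηc k).of_le (by norm_cast)
      calc |mollifierRemainder ψ η (k + 1) z|
        _ ≤ M * (D * (Λ / 2 ^ m) ^ k * 2⁻¹ ^ k) := norm_sub_scaledConv_le hψ.contDiff.continuous
          hψ.hasCompactSupport hψ.integral_eq_one hk (hgrad k) (by positivity) z
        _ = M * D * (Λ / 2 ^ (m + 1)) ^ k := by
          rw [pow_succ, ← div_div, div_eq_mul_inv _ (2 : ℝ), mul_pow]
          ring
        _ ≤ M * D * (Λ / 2 ^ (m + 1)) ^ k * Λ := le_mul_of_one_le_right (by positivity)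
          (le_add_of_nonneg_right hψnonneg)
        _ = M * D * 2 ^ (m + 1) * (Λ / 2 ^ (m + 1)) ^ (k + 1) := by
          rw [pow_succ (Λ / _)]
          field_simp
        _ ≤ _ := by
          gcongr
          exact le_add_of_nonneg_left hB0

theorem exists_abs_mollifierRemainder_le_pow (hψ : IsMollifier ψ) (N : ℕ)
    (hη : ContDiff ℝ (⊤ : ℕ∞) η) (hηc : HasCompactSupport η) :
    ∃ C, 0 ≤ C ∧ ∀ k z, |mollifierRemainder ψ η k z| ≤ C * (2⁻¹ ^ N) ^ k := by
  have : 0 ≤ ∫ w, |ψ w| := integral_nonneg fun _ => abs_nonneg _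
  obtain ⟨m, hm⟩ := pow_unbounded_of_one_lt ((1 + ∫ w, |ψ w|) * 2 ^ N) one_lt_two
  obtain ⟨C, hC, hdecay⟩ := exists_abs_mollifierRemainder_le_div_pow hψ m hη hηc
  refine ⟨C, hC, fun k z => (hdecay k z).trans ?_⟩
  gcongr
  rw [inv_pow, ← one_div, div_le_div_iff₀ (by positivity) (by positivity), one_mul]
  exact hm.le

end MollifierRemainder

section TangentialMax

theorem norm_integral_smul_le_of_support_subset {X F : Type*} [MeasurableSpace X] {μ : Measure X}
    [NormedAddCommGroup F] [NormedSpace ℝ F] {K : X → ℝ} {s : Set X} (hs : μ s ≠ ⊤)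
    (hK : Function.support K ⊆ s) {A : ℝ} (hA : ∀ w, |K w| ≤ A) {g : X → F} {B : ℝ}
    (hB : ∀ w ∈ s, ‖g w‖ ≤ B) : ‖∫ w, K w • g w ∂μ‖ ≤ A * B * μ.real s := by
  rw [← setIntegral_eq_integral_of_forall_compl_eq_zero (s := s) fun w hw => by
    rw [Function.notMem_support.1 fun h => hw (hK h), zero_smul]]
  refine norm_setIntegral_le_of_norm_le_const hs.lt_top fun w hw => ?_
  rw [norm_smul]
  exact mul_le_mul (hA w) (hB w hw) (norm_nonneg _) ((abs_nonneg _).trans (hA w))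

theorem one_add_norm_div_mul_le {E : Type*} [NormedAddCommGroup E] [NormedSpace ℝ E] {ε t ρ : ℝ}
    (hε : 0 < ε) (hε1 : ε ≤ 1) (ht : 0 < t) (x y : E) {w : E} (hw : ‖w‖ ≤ ρ) :
    1 + ‖x - (y - t • w)‖ / (ε * t) ≤ ε⁻¹ * (1 + ρ) * (1 + ‖x - y‖ / t) := by
  have hρ : 0 ≤ ρ := (norm_nonneg w).trans hw
  have hnorm : ‖x - (y - t • w)‖ ≤ ‖x - y‖ + t * ρ := by
    rw [sub_sub_eq_add_sub, add_sub_right_comm]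
    refine (norm_add_le _ _).trans ?_
    rw [norm_smul, Real.norm_of_nonneg ht.le]
    gcongr
  have hε' : 1 ≤ ε⁻¹ := (one_le_inv₀ hε).2 hε1
  calc 1 + ‖x - (y - t • w)‖ / (ε * t)
    _ ≤ 1 + (‖x - y‖ + t * ρ) / (ε * t) := by gcongr
    _ = 1 + ε⁻¹ * (‖x - y‖ / t + ρ) := by field_simp
    _ ≤ ε⁻¹ + ε⁻¹ * (‖x - y‖ / t + ρ) + ε⁻¹ * (ρ * (‖x - y‖ / t)) := by
      have : 0 ≤ ε⁻¹ * (ρ * (‖x - y‖ / t)) := by positivity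
      linarith
    _ = ε⁻¹ * (1 + ρ) * (1 + ‖x - y‖ / t) := by ring

variable {E F : Type*} [NormedAddCommGroup E] [NormedSpace ℝ E] [MeasureSpace E]
  [NormedAddCommGroup F] [NormedSpace ℝ F]

/-- The tangential maximal function `sup_{y, t > 0} |f * K_t|(y) / (1 + |x - y|/t)^N`. -/
def tangentialMax (N : ℕ) (K : E → ℝ) (f : E → F) (x : E) : ℝ≥0∞ :=
  ⨆ (y : E) (t : ℝ) (_ : 0 < t), ENNReal.ofReal (‖scaledConv K f t y‖ / (1 + ‖x - y‖ / t) ^ N)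

/-- The radial maximal function `sup_{t > 0} |f * K_t|(x)`. -/
def radialMax (K : E → ℝ) (f : E → F) (x : E) : ℝ≥0∞ :=
  ⨆ (t : ℝ) (_ : 0 < t), ENNReal.ofReal ‖scaledConv K f t x‖

theorem ofReal_norm_scaledConv_le_radialMax (K : E → ℝ) (f : E → F) {t : ℝ} (ht : 0 < t) (x : E) :
    ENNReal.ofReal ‖scaledConv K f t x‖ ≤ radialMax K f x :=
  le_iSup₂ (f := fun t (_ : 0 < t) => ENNReal.ofReal ‖scaledConv K f t x‖) t ht

theorem tangentialMax_le_ofReal_iff {N : ℕ} {K : E → ℝ} {f : E → F} {x : E} {τ : ℝ} (hτ : 0 ≤ τ) :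
    tangentialMax N K f x ≤ ENNReal.ofReal τ ↔
      ∀ y t, 0 < t → ‖scaledConv K f t y‖ ≤ τ * (1 + ‖x - y‖ / t) ^ N := by
  simp only [tangentialMax, iSup_le_iff, ENNReal.ofReal_le_ofReal_iff hτ]
  refine forall₃_congr fun y t ht => ?_
  rw [div_le_iff₀ (by positivity)]

theorem norm_scaledConv_le_toReal_tangentialMax {N : ℕ} {K : E → ℝ} {f : E → F} {x : E}
    (hfin : tangentialMax N K f x ≠ ⊤) (y : E) {t : ℝ} (ht : 0 < t) :
    ‖scaledConv K f t y‖ ≤ (tangentialMax N K f x).toReal * (1 + ‖x - y‖ / t) ^ N :=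
  (tangentialMax_le_ofReal_iff toReal_nonneg).1 (ofReal_toReal hfin).ge y t ht

variable [BorelSpace E] [(volume : Measure E).IsAddHaarMeasure]

theorem tangentialMax_ne_top (N : ℕ) {K : E → ℝ} (hK : Continuous K) (hKc : HasCompactSupport K)
    {f : E → F} {B : ℝ} (hB : ∀ z, ‖f z‖ ≤ B) (x : E) : tangentialMax N K f x ≠ ⊤ := by
  have hI : 0 ≤ ∫ w, |K w| := integral_nonneg fun _ => abs_nonneg _
  have hB0 : 0 ≤ B := (norm_nonneg _).trans (hB 0)
  refine ne_top_of_le_ne_top ofReal_ne_top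
    ((tangentialMax_le_ofReal_iff (mul_nonneg hI hB0)).2 fun y t ht => ?_)
  refine (norm_scaledConv_le hK hKc hB t y).trans (le_mul_of_one_le_right (by positivity) ?_)
  exact one_le_pow₀ (le_add_of_nonneg_right (by positivity))

variable [FiniteDimensional ℝ E]

variable {ψ η : E → ℝ}

theorem scaledConv_eq_sum_add_mollifierRemainder (hψ : IsMollifier ψ)
    (hη : ContDiff ℝ (⊤ : ℕ∞) η) (hηc : HasCompactSupport η) {f : E → F} (hf : Continuous f)
    (t : ℝ) (y : E) (k : ℕ) :
    scaledConv η f t y =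
      ∑ i ∈ Finset.range k,
        scaledConv (scaledConv ψ (mollifierRemainder ψ η i) (2⁻¹ ^ i)) f t y +
      scaledConv (mollifierRemainder ψ η k) f t y := by
  induction k with
  | zero => simp [mollifierRemainder]
  | succ k ih =>
    have hpow : (0 : ℝ) < 2⁻¹ ^ k := by positivity
    have hψ' := hψ.contDiff.continuous
    have hk := (contDiff_mollifierRemainder hψ hη hηc k).continuous
    have hkc := hasCompactSupport_mollifierRemainder hψ.hasCompactSupport hηc k
    have hconv : HasCompactSupport (scaledConv ψ (mollifierRemainder ψ η k) (2⁻¹ ^ k)) := by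
      rw [scaledConv_eq_convolution _ _ hpow]
      exact (hasCompactSupport_dilation hψ.hasCompactSupport hpow.ne').convolution _ hkc
    rw [ih, Finset.sum_range_succ, mollifierRemainder, scaledConv_sub_left hk hkc
      (continuous_scaledConv hψ' hψ.hasCompactSupport hk hpow) hconv hf]
    abel

theorem tendsto_scaledConv_mollifierRemainder (hψ : IsMollifier ψ) (hη : ContDiff ℝ (⊤ : ℕ∞) η)
    (hηc : HasCompactSupport η) {f : E → F} {B : ℝ} (hB : ∀ z, ‖f z‖ ≤ B) (t : ℝ) (y : E) :
    Filter.Tendsto (fun k => scaledConv (mollifierRemainder ψ η k) f t y) Filter.atTop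
      (nhds 0) := by
  obtain ⟨ρ, -, hρ⟩ := exists_support_mollifierRemainder_subset hψ.hasCompactSupport hηc
  obtain ⟨C, -, hdecay⟩ := exists_abs_mollifierRemainder_le_pow hψ 1 hη hηc
  refine squeeze_zero_norm (fun k => norm_integral_smul_le_of_support_subset
    (measure_closedBall_lt_top (x := (0 : E)) (r := ρ)).ne (hρ k) (hdecay k) fun w _ => hB _) ?_
  have hgeom := _root_.tendsto_pow_atTop_nhds_zero_of_lt_one (r := (2⁻¹ : ℝ) ^ 1) (by norm_num)
    (by norm_num)
  simpa using ((hgeom.const_mul C).mul_const B).mul_const (volume.real (closedBall (0 : E) ρ))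

variable [CompleteSpace F]

theorem norm_scaledConv_scaledConv_le {ψ K : E → ℝ} (hψ : Continuous ψ)
    (hψc : HasCompactSupport ψ) (hK : Continuous K) {ρ A : ℝ}
    (hKρ : Function.support K ⊆ closedBall 0 ρ) (hA : ∀ w, |K w| ≤ A) {f : E → F}
    (hf : Continuous f) {N : ℕ} {x : E} {τ : ℝ} (hτ : 0 ≤ τ)
    (hbound : ∀ y t, 0 < t → ‖scaledConv ψ f t y‖ ≤ τ * (1 + ‖x - y‖ / t) ^ N) {ε : ℝ}
    (hε : 0 < ε) (hε1 : ε ≤ 1) {t : ℝ} (ht : 0 < t) (y : E) :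
    ‖scaledConv (scaledConv ψ K ε) f t y‖ ≤
      A * (τ * (ε⁻¹ * (1 + ρ) * (1 + ‖x - y‖ / t)) ^ N) * volume.real (closedBall (0 : E) ρ) := by
  rw [scaledConv_scaledConv hK (.of_support_subset_isCompact (isCompact_closedBall 0 ρ) hKρ) hψ hψc
    hf hε ht]
  refine norm_integral_smul_le_of_support_subset measure_closedBall_lt_top.ne hKρ hA fun w hw => ?_
  refine (hbound _ _ (by positivity)).trans ?_
  gcongr
  exact one_add_norm_div_mul_le hε hε1 ht x y (by simpa using hw)

theorem exists_norm_scaledConv_scaledConv_mollifierRemainder_le (hψ : IsMollifier ψ) (N : ℕ)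
    (hη : ContDiff ℝ (⊤ : ℕ∞) η) (hηc : HasCompactSupport η) :
    ∃ C, 0 ≤ C ∧ ∀ f : E → F, Continuous f → ∀ (x : E) (τ : ℝ), 0 ≤ τ →
      (∀ y t, 0 < t → ‖scaledConv ψ f t y‖ ≤ τ * (1 + ‖x - y‖ / t) ^ N) →
      ∀ y t, 0 < t → ∀ i,
        ‖scaledConv (scaledConv ψ (mollifierRemainder ψ η i) (2⁻¹ ^ i)) f t y‖ ≤
          C * τ * (1 + ‖x - y‖ / t) ^ N * (1 / 2) ^ i := by
  obtain ⟨ρ, hρ0, hρ⟩ := exists_support_mollifierRemainder_subset hψ.hasCompactSupport hηc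
  obtain ⟨C, hC, hdecay⟩ := exists_abs_mollifierRemainder_le_pow hψ (N + 1) hη hηc
  set V := volume.real (closedBall (0 : E) ρ)
  refine ⟨C * (1 + ρ) ^ N * V, by positivity, fun f hf x τ hτ hbound y t ht i => ?_⟩
  refine (norm_scaledConv_scaledConv_le hψ.contDiff.continuous hψ.hasCompactSupport
    (contDiff_mollifierRemainder hψ hη hηc i).continuous (hρ i) (hdecay i) hf hτ hbound
    (by positivity) (pow_le_one₀ (by norm_num) (by norm_num)) ht y).trans_eq ?_
  have hpow : ((2⁻¹ : ℝ) ^ (N + 1)) ^ i * ((2⁻¹ ^ i)⁻¹) ^ N = (1 / 2) ^ i := by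
    rw [← pow_mul, ← inv_pow, ← pow_mul, add_one_mul, pow_add, mul_right_comm, mul_comm i N,
      ← mul_pow, one_div]
    norm_num
  rw [← hpow, mul_pow, mul_pow]
  ring

-- The Fefferman–Stein reproducing argument: `η` is the sum of the pieces `ψ_{2^{-i}} * ρ_i`, where
-- the remainders `ρ_i` decay faster than the weights `2^{iN}` grow.
theorem exists_norm_scaledConv_le_toReal_tangentialMax (hψ : IsMollifier ψ) (N : ℕ)
    (hη : ContDiff ℝ (⊤ : ℕ∞) η) (hηc : HasCompactSupport η) :
    ∃ C, 0 ≤ C ∧ ∀ f : E → F, Continuous f → ∀ B, (∀ z, ‖f z‖ ≤ B) → ∀ x y t, 0 < t →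
      ‖scaledConv η f t y‖ ≤ C * (tangentialMax N ψ f x).toReal * (1 + ‖x - y‖ / t) ^ N := by
  obtain ⟨C, hC, hstep⟩ :=
    exists_norm_scaledConv_scaledConv_mollifierRemainder_le (F := F) hψ N hη hηc
  refine ⟨2 * C, by positivity, fun f hf B hB x y t ht => ?_⟩
  have hfin := tangentialMax_ne_top N hψ.contDiff.continuous hψ.hasCompactSupport hB x
  set A := C * (tangentialMax N ψ f x).toReal * (1 + ‖x - y‖ / t) ^ N with hA
  have hpartial : ∀ k, ‖scaledConv η f t y - scaledConv (mollifierRemainder ψ η k) f t y‖ ≤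
      2 * A := fun k => by
    rw [scaledConv_eq_sum_add_mollifierRemainder hψ hη hηc hf t y k, add_sub_cancel_right]
    calc _ ≤ ∑ i ∈ Finset.range k, A * (1 / 2) ^ i := norm_sum_le_of_le _ fun i _ =>
          hstep f hf x _ toReal_nonneg
            (fun y t ht => norm_scaledConv_le_toReal_tangentialMax hfin y ht) y t ht i
      _ = A * ∑ i ∈ Finset.range k, (1 / 2) ^ i := by rw [Finset.mul_sum]
      _ ≤ A * 2 := by gcongr; exact sum_geometric_two_le k
      _ = 2 * A := mul_comm _ _
  have hlim := (tendsto_scaledConv_mollifierRemainder hψ hη hηc hB t y).const_sub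
    (scaledConv η f t y)
  rw [sub_zero] at hlim
  exact (le_of_tendsto' hlim.norm hpartial).trans_eq (by rw [hA]; ring)

end TangentialMax

section BallCovering

variable {X : Type*} [PseudoMetricSpace X] [TopologicalSpace.SeparableSpace X] [MeasurableSpace X]
  [OpensMeasurableSpace X]

theorem exists_countable_covering_enlargement_ball (μ : Measure X) {t : Set (X × ℝ)} {R : ℝ}
    (hpos : ∀ p ∈ t, 0 < p.2) (hR : ∀ p ∈ t, p.2 ≤ R) (g : X → ℝ≥0∞) :
    ∃ u ⊆ t, u.Countable ∧ (⋃ p ∈ t, ball p.1 p.2) ⊆ (⋃ p ∈ u, ball p.1 (4 * p.2)) ∧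
      ∑' p : u, ∫⁻ y in ball p.1.1 p.1.2, g y ∂μ ≤ ∫⁻ y in ⋃ p ∈ t, ball p.1 p.2, g y ∂μ := by
  obtain ⟨u, hut, hdisj, hcov⟩ := Vitali.exists_disjoint_subfamily_covering_enlargement_ball
    t Prod.fst Prod.snd R hR 4 (by norm_num)
  have hcount : u.Countable := hdisj.countable_of_isOpen (fun _ _ => isOpen_ball) fun p hp =>
    nonempty_ball.2 (hpos p (hut hp))
  refine ⟨u, hut, hcount, iUnion₂_subset fun p hp => ?_, ?_⟩
  · obtain ⟨b, hb, hpb⟩ := hcov p hp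
    exact hpb.trans (subset_biUnion_of_mem (u := fun p : X × ℝ => ball p.1 (4 * p.2)) hb)
  · rw [← lintegral_biUnion hcount (fun _ _ => measurableSet_ball) hdisj]
    exact lintegral_mono_set (biUnion_subset_biUnion_left hut)

end BallCovering

section LayerCake

theorem lintegral_Ioc_rpow {s b : ℝ} (hs : 0 < s) (hb : 0 ≤ b) :
    ∫⁻ t in Ioc 0 b, ENNReal.ofReal (t ^ (s - 1)) = ENNReal.ofReal (b ^ s / s) := by
  have hint : IntervalIntegrable (fun t : ℝ => t ^ (s - 1)) volume 0 b :=
    intervalIntegral.intervalIntegrable_rpow' (by linarith)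
  rw [← ofReal_integral_eq_lintegral_ofReal
      ((intervalIntegrable_iff_integrableOn_Ioc_of_le hb).1 hint)
      (ae_restrict_of_forall_mem measurableSet_Ioc fun t ht => Real.rpow_nonneg ht.1.le _),
    ← intervalIntegral.integral_of_le hb, integral_rpow (Or.inl (by linarith)), sub_add_cancel,
    Real.zero_rpow hs.ne', sub_zero]

theorem lintegral_Ioi_rpow_eq_top {s : ℝ} (hs : 0 < s) :
    ∫⁻ t in Ioi (0 : ℝ), ENNReal.ofReal (t ^ (s - 1)) = ⊤ := by
  refine eq_top_of_forall_nnreal_le fun r => ?_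
  have hr : ((s * r) ^ s⁻¹) ^ s / s = (r : ℝ) := by
    rw [Real.rpow_inv_rpow (by positivity) hs.ne', mul_div_cancel_left₀ _ hs.ne']
  calc (r : ℝ≥0∞) = ENNReal.ofReal (((s * r) ^ s⁻¹) ^ s / s) := by rw [hr, ofReal_coe_nnreal]
    _ = ∫⁻ t in Ioc 0 ((s * r) ^ s⁻¹), ENNReal.ofReal (t ^ (s - 1)) :=
      (lintegral_Ioc_rpow hs (by positivity)).symm
    _ ≤ _ := lintegral_mono_set Ioc_subset_Ioi_self

theorem rpow_eq_lintegral_indicator {s : ℝ} (hs : 0 < s) (a : ℝ≥0∞) :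
    a ^ s = ENNReal.ofReal s *
      ∫⁻ t in Ioi (0 : ℝ), {t | ENNReal.ofReal t < a}.indicator
        (fun t => ENNReal.ofReal (t ^ (s - 1))) t := by
  rw [lintegral_indicator (measurableSet_lt ENNReal.measurable_ofReal measurable_const),
    Measure.restrict_restrict (measurableSet_lt ENNReal.measurable_ofReal measurable_const)]
  induction a with
  | top => simp [lintegral_Ioi_rpow_eq_top hs, hs, mul_top]
  | coe a =>
    have hset : {t : ℝ | ENNReal.ofReal t < a} ∩ Ioi 0 = Ioo 0 (a : ℝ) := by
      ext t
      simp only [mem_inter_iff, mem_ofPred_eq, mem_Ioi, mem_Ioo, and_comm (a := 0 < t)]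
      exact and_congr_left fun ht => by
        rw [ofReal_lt_iff_lt_toReal ht.le coe_ne_top, coe_toReal]
    rw [hset, restrict_Ioo_eq_restrict_Ioc, lintegral_Ioc_rpow hs a.coe_nonneg, ← ofReal_mul hs.le,
      mul_div_cancel₀ _ hs.ne', ← ofReal_rpow_of_nonneg a.coe_nonneg hs.le, ofReal_coe_nnreal]

theorem lintegral_rpow_eq_lintegral_measure_lt {X : Type*} [MeasurableSpace X] (μ : Measure X)
    [SFinite μ] {f : X → ℝ≥0∞} (hf : Measurable f) {s : ℝ} (hs : 0 < s) :
    ∫⁻ x, f x ^ s ∂μ = ENNReal.ofReal s *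
      ∫⁻ t in Ioi (0 : ℝ), μ {x | ENNReal.ofReal t < f x} * ENNReal.ofReal (t ^ (s - 1)) := by
  have hmeas : MeasurableSet {z : X × ℝ | ENNReal.ofReal z.2 < f z.1} :=
    measurableSet_lt (by fun_prop) (by fun_prop)
  have hind : Measurable fun z : X × ℝ => {z : X × ℝ | ENNReal.ofReal z.2 < f z.1}.indicator
      (fun z => ENNReal.ofReal (z.2 ^ (s - 1))) z := Measurable.indicator (by fun_prop) hmeas
  simp_rw [rpow_eq_lintegral_indicator hs]
  rw [lintegral_const_mul' _ _ ofReal_ne_top, lintegral_lintegral_swap hind.aemeasurable]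
  congr 1
  refine lintegral_congr fun t => ?_
  calc _ = ∫⁻ x, {x | ENNReal.ofReal t < f x}.indicator
        (fun _ => ENNReal.ofReal (t ^ (s - 1))) x ∂μ := rfl
    _ = _ := by
      rw [lintegral_indicator_const (measurableSet_lt measurable_const hf), mul_comm]

end LayerCake

section HardyLittlewood

variable {E : Type*} [NormedAddCommGroup E] [MeasureSpace E]

/-- The uncentred Hardy–Littlewood maximal function: the supremum of the averages of `g` over the
open balls that contain `x`. -/
def hlMax (g : E → ℝ≥0∞) (x : E) : ℝ≥0∞ :=
  ⨆ (z : E) (r : ℝ) (_ : x ∈ ball z r), ⨍⁻ y in ball z r, g y ∂volume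

theorem lt_hlMax_iff {g : E → ℝ≥0∞} {x : E} {a : ℝ≥0∞} :
    a < hlMax g x ↔ ∃ z r, x ∈ ball z r ∧ a < ⨍⁻ y in ball z r, g y ∂volume := by
  simp only [hlMax, lt_iSup_iff, exists_prop]

theorem isOpen_setOf_lt_hlMax (g : E → ℝ≥0∞) (a : ℝ≥0∞) : IsOpen {x | a < hlMax g x} := by
  refine isOpen_iff_forall_mem_open.2 fun x hx => ?_
  obtain ⟨z, r, hxz, h⟩ := lt_hlMax_iff.1 hx
  exact ⟨ball z r, fun y hy => lt_hlMax_iff.2 ⟨z, r, hy, h⟩, isOpen_ball, hxz⟩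

theorem measurable_hlMax [BorelSpace E] (g : E → ℝ≥0∞) : Measurable (hlMax g) :=
  measurable_of_Ioi fun a => (isOpen_setOf_lt_hlMax g a).measurableSet

theorem setLIntegral_ball_le_mul_hlMax (g : E → ℝ≥0∞) {x z : E} {r : ℝ}
    (hx : x ∈ ball z r) (hfin : volume (ball z r) ≠ ⊤) :
    ∫⁻ y in ball z r, g y ≤ volume (ball z r) * hlMax g x := by
  rw [← measure_mul_setLAverage g hfin]
  gcongr
  exact le_iSup_of_le z (le_iSup₂_of_le r hx le_rfl)

theorem hlMax_le_add_hlMax_indicator (g : E → ℝ≥0∞)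
    (b : ℝ≥0∞) (x : E) : hlMax g x ≤ b + hlMax ({y | b < g y}.indicator g) x := by
  have hle : ∀ y, g y ≤ b + {y | b < g y}.indicator g y := fun y => by
    by_cases hy : b < g y
    · rw [indicator_of_mem (show y ∈ {y | b < g y} from hy)]
      exact le_add_self
    · exact (not_lt.1 hy).trans le_self_add
  refine iSup_le fun z => iSup₂_le fun r hx => ?_
  calc ⨍⁻ y in ball z r, g y ∂volume
    _ ≤ ⨍⁻ y in ball z r, b + {y | b < g y}.indicator g y ∂volume := lintegral_mono hle
    _ = (⨍⁻ _ in ball z r, b ∂volume) + ⨍⁻ y in ball z r, {y | b < g y}.indicator g y ∂volume :=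
      lintegral_add_left measurable_const _
    _ ≤ _ := by
      gcongr
      · rw [setLAverage_eq, setLIntegral_const]
        exact ENNReal.div_le_of_le_mul le_rfl
      · exact le_iSup_of_le z (le_iSup₂_of_le r hx le_rfl)

variable [BorelSpace E] [NormedSpace ℝ E] [FiniteDimensional ℝ E]
  [(volume : Measure E).IsAddHaarMeasure]

theorem volume_ball_mul (z : E) {s r : ℝ} (hs : 0 < s) :
    volume (ball z (s * r)) = ENNReal.ofReal (s ^ Module.finrank ℝ E) * volume (ball z r) := by
  rw [Measure.addHaar_ball_mul_of_pos _ _ hs, Measure.addHaar_ball_center _ z]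

theorem le_mul_hlMax_of_forall_mem_ball_le {g : E → ℝ≥0∞} {b : ℝ≥0∞} {y : E} {r : ℝ} (hr : 0 < r)
    (hb : ∀ z ∈ ball y r, b ≤ g z) (x : E) :
    b ≤ ENNReal.ofReal ((1 + ‖x - y‖ / r) ^ Module.finrank ℝ E) * hlMax g x := by
  have hsub : ball y r ⊆ ball x ((1 + ‖x - y‖ / r) * r) := ball_subset_ball' (by
    rw [dist_eq_norm', add_mul, one_mul, div_mul_cancel₀ _ hr.ne'])
  refine (ENNReal.mul_le_mul_iff_left (measure_ball_pos volume y hr).ne'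
    measure_ball_lt_top.ne).1 ?_
  calc b * volume (ball y r)
    _ = ∫⁻ _ in ball y r, b := (setLIntegral_const _ _).symm
    _ ≤ ∫⁻ z in ball y r, g z := setLIntegral_mono' measurableSet_ball hb
    _ ≤ ∫⁻ z in ball x ((1 + ‖x - y‖ / r) * r), g z := lintegral_mono_set hsub
    _ ≤ volume (ball x ((1 + ‖x - y‖ / r) * r)) * hlMax g x :=
      setLIntegral_ball_le_mul_hlMax _ (mem_ball_self (by positivity)) measure_ball_lt_top.ne
    _ = _ := by
      rw [volume_ball_mul _ (by positivity), Measure.addHaar_ball_center _ x,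
        ← Measure.addHaar_ball_center _ y, mul_right_comm]

theorem le_hlMax {g : E → ℝ≥0∞} (hg : LowerSemicontinuous g) (x : E) : g x ≤ hlMax g x := by
  refine le_of_forall_lt_imp_le_of_dense fun b hb => ?_
  obtain ⟨r, hr, hball⟩ := Metric.eventually_nhds_iff_ball.1 (hg x b hb)
  simpa using le_mul_hlMax_of_forall_mem_ball_le hr (fun z hz => (hball z hz).le) x

variable [Nontrivial E]

theorem exists_forall_le_of_mul_volume_ball_le {a I : ℝ≥0∞} (ha : a ≠ 0) (hI : I ≠ ⊤) :
    ∃ R : ℝ, ∀ (z : E) (r : ℝ), a * volume (ball z r) ≤ I → r ≤ R := by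
  have hpos : a * volume (ball (0 : E) 1) ≠ 0 :=
    mul_ne_zero ha (measure_ball_pos volume 0 one_pos).ne'
  refine ⟨max 1 (I / (a * volume (ball (0 : E) 1))).toReal, fun z r h => ?_⟩
  rcases le_or_gt r 1 with hr | hr
  · exact le_max_of_le_left hr
  refine le_max_of_le_right ((le_self_pow₀ hr.le (Module.finrank_pos (R := ℝ) (M := E)).ne').trans
    ((ofReal_le_iff_le_toReal (div_ne_top hI hpos)).1 ?_))
  rw [ENNReal.le_div_iff_mul_le (.inl hpos) (.inr hI), mul_left_comm,
    ← Measure.addHaar_ball_of_pos _ z (by positivity)]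
  exact h

theorem mul_volume_setOf_lt_hlMax_le (g : E → ℝ≥0∞) (a : ℝ≥0∞) :
    a * volume {x | a < hlMax g x} ≤ 4 ^ Module.finrank ℝ E * ∫⁻ y, g y := by
  rcases eq_or_ne a 0 with rfl | ha
  · simp
  rcases eq_or_ne (∫⁻ y, g y) ⊤ with hI | hI
  · simp [hI]
  set t : Set (E × ℝ) := {p | 0 < p.2 ∧ a * volume (ball p.1 p.2) ≤ ∫⁻ y in ball p.1 p.2, g y}
  obtain ⟨R, hR⟩ := exists_forall_le_of_mul_volume_ball_le (E := E) ha hI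
  obtain ⟨u, hut, hu, hcov, hsum⟩ := exists_countable_covering_enlargement_ball volume (t := t)
    (fun p hp => hp.1) (fun p hp => hR _ _ (hp.2.trans (setLIntegral_le_lintegral _ _))) g
  have hsub : {x | a < hlMax g x} ⊆ ⋃ p ∈ u, ball p.1 (4 * p.2) := fun x hx => by
    obtain ⟨z, r, hxz, h⟩ := lt_hlMax_iff.1 hx
    refine hcov (mem_biUnion (x := (z, r)) ⟨pos_of_mem_ball hxz, ?_⟩ hxz)
    rw [← measure_mul_setLAverage g measure_ball_lt_top.ne, mul_comm]
    gcongr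
  calc a * volume {x | a < hlMax g x}
    _ ≤ a * ∑' p : u, volume (ball p.1.1 (4 * p.1.2)) := by
      gcongr
      exact (measure_mono hsub).trans (measure_biUnion_le _ hu _)
    _ = ∑' p : u, 4 ^ Module.finrank ℝ E * (a * volume (ball p.1.1 p.1.2)) := by
      rw [← ENNReal.tsum_mul_left]
      refine tsum_congr fun p => ?_
      rw [volume_ball_mul _ four_pos, ofReal_pow zero_le_four, ofReal_ofNat, mul_left_comm]
    _ ≤ ∑' p : u, 4 ^ Module.finrank ℝ E * ∫⁻ y in ball p.1.1 p.1.2, g y := by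
      gcongr with p
      exact (hut p.2).2
    _ = 4 ^ Module.finrank ℝ E * ∑' p : u, ∫⁻ y in ball p.1.1 p.1.2, g y := ENNReal.tsum_mul_left
    _ ≤ 4 ^ Module.finrank ℝ E * ∫⁻ y, g y := by
      gcongr
      exact hsum.trans (setLIntegral_le_lintegral _ _)

theorem mul_volume_setOf_lt_hlMax_le_withDensity {g : E → ℝ≥0∞} (hg : Measurable g) (a : ℝ≥0∞) :
    a * volume {x | a < hlMax g x} ≤
      2 * 4 ^ Module.finrank ℝ E * volume.withDensity g {x | a < 2 * g x} := by
  set G := {y | a / 2 < g y}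
  have hG : {x | a < 2 * g x} = G := by
    ext x
    rw [mem_ofPred_eq, mul_comm, ← ENNReal.div_lt_iff (.inl two_ne_zero) (.inl ofNat_ne_top)]
    rfl
  have hGm : MeasurableSet G := measurableSet_lt measurable_const hg
  have hsub : {x | a < hlMax g x} ⊆ {x | a / 2 < hlMax (G.indicator g) x} :=
    fun x (hx : a < hlMax g x) => by
      by_contra h
      refine hx.not_ge ((hlMax_le_add_hlMax_indicator g (a / 2) x).trans ?_)
      exact (add_le_add_right (not_lt.1 h) _).trans_eq (ENNReal.add_halves a)
  calc a * volume {x | a < hlMax g x}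
    _ ≤ 2 * (a / 2 * volume {x | a / 2 < hlMax (G.indicator g) x}) := by
      rw [← mul_assoc, ENNReal.mul_div_cancel two_ne_zero ofNat_ne_top]
      gcongr
    _ ≤ 2 * (4 ^ Module.finrank ℝ E * ∫⁻ y, G.indicator g y) := by
      gcongr 2 * ?_
      exact mul_volume_setOf_lt_hlMax_le (E := E) _ _
    _ = _ := by rw [lintegral_indicator hGm, mul_assoc, hG, withDensity_apply _ hGm]

-- Both sides are layer-cake integrals: the left one for Lebesgue measure, and the right one for the
-- measure with density `g`, which is what the truncated weak type bound compares it with.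
theorem lintegral_hlMax_rpow_le {s : ℝ} (hs : 1 < s) {g : E → ℝ≥0∞} (hg : Measurable g) :
    ∫⁻ x, hlMax g x ^ s ≤
      ENNReal.ofReal (s / (s - 1)) * (2 * 4 ^ Module.finrank ℝ E * 2 ^ (s - 1)) *
        ∫⁻ x, g x ^ s := by
  have hs' : 0 < s - 1 := sub_pos.2 hs
  set ν := (volume : Measure E).withDensity g
  set A : ℝ≥0∞ := 2 * 4 ^ Module.finrank ℝ E
  have hweak : ∀ t ∈ Ioi (0 : ℝ),
      volume {x | ENNReal.ofReal t < hlMax g x} * ENNReal.ofReal (t ^ (s - 1)) ≤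
        A * (ν {x | ENNReal.ofReal t < 2 * g x} * ENNReal.ofReal (t ^ (s - 1 - 1))) := by
    intro t (ht : 0 < t)
    have hpow : t ^ (s - 1) = t * t ^ (s - 1 - 1) := by
      rw [← Real.rpow_one_add' ht.le (by linarith), add_sub_cancel]
    rw [hpow, ofReal_mul ht.le, ← mul_assoc, ← mul_assoc, mul_comm (volume _)]
    exact mul_le_mul_left (mul_volume_setOf_lt_hlMax_le_withDensity hg _) _
  calc ∫⁻ x, hlMax g x ^ s
    _ = ENNReal.ofReal s * ∫⁻ t in Ioi (0 : ℝ),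
        volume {x | ENNReal.ofReal t < hlMax g x} * ENNReal.ofReal (t ^ (s - 1)) :=
      lintegral_rpow_eq_lintegral_measure_lt _ (measurable_hlMax g) (by linarith)
    _ ≤ ENNReal.ofReal s * (A * ∫⁻ t in Ioi (0 : ℝ),
        ν {x | ENNReal.ofReal t < 2 * g x} * ENNReal.ofReal (t ^ (s - 1 - 1))) := by
      rw [← lintegral_const_mul' A _ (by finiteness)]
      exact mul_le_mul_right (setLIntegral_mono' measurableSet_Ioi hweak) _
    _ = ENNReal.ofReal (s / (s - 1)) * (A * ∫⁻ x, (2 * g x) ^ (s - 1) ∂ν) := by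
      rw [lintegral_rpow_eq_lintegral_measure_lt ν (by fun_prop) hs', mul_left_comm A,
        ← mul_assoc (ENNReal.ofReal (s / _)), ← ofReal_mul (by positivity),
        div_mul_cancel₀ _ hs'.ne']
    _ = ENNReal.ofReal (s / (s - 1)) * (A * (2 ^ (s - 1) * ∫⁻ x, g x ^ s)) := by
      rw [lintegral_withDensity_eq_lintegral_mul _ hg (by fun_prop),
        ← lintegral_const_mul' (2 ^ (s - 1)) _ (by finiteness)]
      congr! 4 with x
      have hpow : g x ^ s = g x * g x ^ (s - 1) := by
        simpa using ENNReal.rpow_add_of_nonneg (x := g x) 1 (s - 1) zero_le_one hs'.le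
      rw [Pi.mul_apply, mul_rpow_of_nonneg _ _ hs'.le, hpow, mul_left_comm]
    _ = _ := by ring

theorem exists_setLIntegral_rpow_le_of_rpow_le_mul_hlMax {q p : ℝ} (hq : 0 < q) (hqp : q < p)
    {A : ℝ≥0∞} (hA : A ≠ ⊤) :
    ∃ C : ℝ≥0∞, C ≠ ⊤ ∧ ∀ f g : E → ℝ≥0∞, Measurable g → ∀ S, MeasurableSet S →
      (∀ x ∈ S, f x ^ q ≤ A * hlMax (fun y => g y ^ q) x) →
      ∫⁻ x in S, f x ^ p ≤ C * ∫⁻ x, g x ^ p := by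
  have hs : 1 < p / q := (one_lt_div hq).2 hqp
  have hpow : ∀ a : ℝ≥0∞, a ^ p = (a ^ q) ^ (p / q) := fun a => by
    rw [← ENNReal.rpow_mul, mul_div_cancel₀ _ hq.ne']
  refine ⟨A ^ (p / q) * (ENNReal.ofReal (p / q / (p / q - 1)) *
    (2 * 4 ^ Module.finrank ℝ E * 2 ^ (p / q - 1))), by finiteness, fun f g hg S hS hfg => ?_⟩
  calc ∫⁻ x in S, f x ^ p
    _ ≤ ∫⁻ x in S, A ^ (p / q) * hlMax (fun y => g y ^ q) x ^ (p / q) :=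
      setLIntegral_mono' hS fun x hx => by
        rw [hpow, ← mul_rpow_of_nonneg _ _ (by positivity)]
        gcongr
        exact hfg x hx
    _ ≤ ∫⁻ x, A ^ (p / q) * hlMax (fun y => g y ^ q) x ^ (p / q) := setLIntegral_le_lintegral _ _
    _ = A ^ (p / q) * ∫⁻ x, hlMax (fun y => g y ^ q) x ^ (p / q) :=
      lintegral_const_mul' _ _ (by finiteness)
    _ ≤ _ := by
      rw [mul_assoc]
      gcongr
      simp_rw [hpow (g _)]
      exact lintegral_hlMax_rpow_le hs (hg.pow_const q)

end HardyLittlewood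

section MaximalComparison

variable {E F : Type*} [NormedAddCommGroup E] [NormedSpace ℝ E] [MeasureSpace E]
  [NormedAddCommGroup F] [NormedSpace ℝ F]

theorem lowerSemicontinuous_tangentialMax (N : ℕ) (K : E → ℝ) (f : E → F) :
    LowerSemicontinuous (tangentialMax N K f) := by
  refine lowerSemicontinuous_iSup fun y => lowerSemicontinuous_biSup fun t ht =>
    Continuous.lowerSemicontinuous (ENNReal.continuous_ofReal.comp ?_)
  exact continuous_const.div (by fun_prop) fun x => by positivity

theorem exists_half_toReal_tangentialMax_mul_le {N : ℕ} {K : E → ℝ} {f : E → F} {x : E}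
    (hfin : tangentialMax N K f x ≠ ⊤) :
    ∃ (y : E) (t : ℝ), 0 < t ∧
      (tangentialMax N K f x).toReal / 2 * (1 + ‖x - y‖ / t) ^ N ≤ ‖scaledConv K f t y‖ := by
  set τ := (tangentialMax N K f x).toReal with hτ
  rcases (toReal_nonneg : 0 ≤ τ).eq_or_lt with h0 | hτ0
  · exact ⟨x, 1, one_pos, by simp [hτ, ← h0]⟩
  by_contra! h
  have hle := (tangentialMax_le_ofReal_iff (half_pos hτ0).le).2 fun y t ht => (h y t ht).le
  rw [le_ofReal_iff_toReal_le hfin (half_pos hτ0).le] at hle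
  linarith

variable [BorelSpace E] [(volume : Measure E).IsAddHaarMeasure] [FiniteDimensional ℝ E]

theorem lowerSemicontinuous_radialMax {K : E → ℝ} (hK : Continuous K) (hKc : HasCompactSupport K)
    {f : E → F} (hf : Continuous f) : LowerSemicontinuous (radialMax K f) :=
  lowerSemicontinuous_biSup fun _ ht => Continuous.lowerSemicontinuous
    (ENNReal.continuous_ofReal.comp (continuous_scaledConv hK hKc hf ht).norm)

variable [CompleteSpace F] {ψ : E → ℝ}

theorem exists_norm_fderiv_scaledConv_le (hψ : IsMollifier ψ) (N : ℕ) :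
    ∃ C, 0 ≤ C ∧ ∀ f : E → F, Continuous f → ∀ B, (∀ z, ‖f z‖ ≤ B) → ∀ x z t, 0 < t →
      ‖fderiv ℝ (scaledConv ψ f t) z‖ ≤
        t⁻¹ * (C * (tangentialMax N ψ f x).toReal * (1 + ‖x - z‖ / t) ^ N) := by
  set b := Module.finBasis ℝ E
  obtain ⟨A, hA, hopNorm⟩ := b.exists_opNorm_le (F := F)
  choose C hC hbound using fun i => exists_norm_scaledConv_le_toReal_tangentialMax (F := F) hψ N
    (hψ.contDiff.fderiv_right (m := (⊤ : ℕ∞)) (by simp) |>.clm_apply (contDiff_const (c := b i)))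
    (hψ.hasCompactSupport.fderiv_apply ℝ (b i))
  have hsum : 0 ≤ ∑ i, C i := Finset.sum_nonneg fun i _ => hC i
  refine ⟨A * ∑ i, C i, by positivity, fun f hf B hB x z t ht => ?_⟩
  set W := (tangentialMax N ψ f x).toReal * (1 + ‖x - z‖ / t) ^ N with hW
  have hcoord : ∀ i, ‖fderiv ℝ (scaledConv ψ f t) z (b i)‖ ≤ t⁻¹ * ((∑ i, C i) * W) := fun i => by
    rw [fderiv_scaledConv_apply (hψ.contDiff.of_le (by simp)) hψ.hasCompactSupport hf ht, norm_smul,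
      norm_inv, Real.norm_of_nonneg ht.le]
    gcongr
    refine (hbound i f hf B hB x z t ht).trans ?_
    rw [mul_assoc]
    gcongr
    exact Finset.single_le_sum (fun i _ => hC i) (Finset.mem_univ i)
  refine (hopNorm (by positivity) hcoord).trans_eq ?_
  rw [hW]
  ring

theorem exists_norm_scaledConv_sub_le (hψ : IsMollifier ψ) (N : ℕ) :
    ∃ C, 0 ≤ C ∧ ∀ f : E → F, Continuous f → ∀ B, (∀ z, ‖f z‖ ≤ B) → ∀ x y t, 0 < t →
      ∀ δ ≤ 1, ∀ y' ∈ ball y (δ * t), ‖scaledConv ψ f t y - scaledConv ψ f t y'‖ ≤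
        δ * C * ((tangentialMax N ψ f x).toReal * (1 + ‖x - y‖ / t) ^ N) := by
  obtain ⟨C, hC, hgrad⟩ := exists_norm_fderiv_scaledConv_le (F := F) hψ N
  refine ⟨C * 2 ^ N, by positivity, fun f hf B hB x y t ht δ hδ y' hy' => ?_⟩
  set τ := (tangentialMax N ψ f x).toReal
  set L := 1 + ‖x - y‖ / t
  have hgrad' : ∀ z ∈ ball y (δ * t),
      ‖fderiv ℝ (scaledConv ψ f t) z‖ ≤ t⁻¹ * (C * τ * (2 * L) ^ N) := fun z hz => by
    refine (hgrad f hf B hB x z t ht).trans ?_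
    gcongr
    have hxz : ‖x - z‖ / t ≤ ‖x - y‖ / t + δ := by
      rw [div_le_iff₀ ht, add_mul, div_mul_cancel₀ _ ht.ne']
      linarith [norm_sub_le_norm_sub_add_norm_sub x y z, mem_ball_iff_norm'.1 hz]
    have : 0 ≤ ‖x - y‖ / t := by positivity
    linarith
  have hdiff : ∀ z ∈ ball y (δ * t), DifferentiableAt ℝ (scaledConv ψ f t) z := fun z _ =>
    (hasFDerivAt_scaledConv_left (hψ.contDiff.of_le (by simp)) hψ.hasCompactSupport hf ht
      z).differentiableAt
  calc ‖scaledConv ψ f t y - scaledConv ψ f t y'‖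
    _ ≤ t⁻¹ * (C * τ * (2 * L) ^ N) * ‖y - y'‖ :=
      (convex_ball y (δ * t)).norm_image_sub_le_of_norm_fderiv_le hdiff hgrad' hy'
        (mem_ball_self (pos_of_mem_ball hy'))
    _ ≤ t⁻¹ * (C * τ * (2 * L) ^ N) * (δ * t) := by
      gcongr
      exact (mem_ball_iff_norm'.1 hy').le
    _ = δ * (C * 2 ^ N) * (τ * L ^ N) := by rw [mul_pow]; field_simp

theorem exists_forall_mem_ball_le_norm_scaledConv (hψ : IsMollifier ψ) (N : ℕ) :
    ∃ δ, 0 < δ ∧ δ ≤ 1 ∧ ∀ f : E → F, Continuous f → ∀ B, (∀ z, ‖f z‖ ≤ B) → ∀ x,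
      ∃ (y : E) (t : ℝ), 0 < t ∧ ∀ y' ∈ ball y (δ * t),
        (tangentialMax N ψ f x).toReal / 4 * (1 + ‖x - y‖ / t) ^ N ≤ ‖scaledConv ψ f t y'‖ := by
  obtain ⟨C, hC, hosc⟩ := exists_norm_scaledConv_sub_le (F := F) hψ N
  have hδ1 : (4 * (C + 1))⁻¹ ≤ 1 := inv_le_one_of_one_le₀ (by linarith)
  have hδC : (4 * (C + 1))⁻¹ * C ≤ 1 / 4 := by
    rw [inv_mul_le_iff₀ (by positivity)]
    linarith
  refine ⟨(4 * (C + 1))⁻¹, by positivity, hδ1, fun f hf B hB x => ?_⟩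
  have hfin := tangentialMax_ne_top N hψ.contDiff.continuous hψ.hasCompactSupport hB x
  obtain ⟨y, t, ht, hyt⟩ := exists_half_toReal_tangentialMax_mul_le hfin
  refine ⟨y, t, ht, fun y' hy' => ?_⟩
  set W := (tangentialMax N ψ f x).toReal * (1 + ‖x - y‖ / t) ^ N with hW
  have hW0 : 0 ≤ W := by positivity
  have hosc' := (hosc f hf B hB x y t ht _ hδ1 y' hy').trans (mul_le_mul_of_nonneg_right hδC hW0)
  rw [div_mul_eq_mul_div, ← hW] at hyt ⊢
  linarith [norm_sub_norm_le (scaledConv ψ f t y) (scaledConv ψ f t y')]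

theorem pow_mul_rpow_le_mul_pow_rpow {a b q : ℝ} {k N : ℕ} (ha : 0 ≤ a) (hb : 1 ≤ b)
    (hk : k ≤ N * q) : b ^ k * a ^ q ≤ (a * b ^ N) ^ q := by
  rw [Real.mul_rpow ha (by positivity), mul_comm]
  gcongr
  rw [← Real.rpow_natCast, ← Real.rpow_natCast, ← Real.rpow_mul (by positivity)]
  exact Real.rpow_le_rpow_of_exponent_le hb hk

-- The oscillation bound makes `f * ψ_t` large on a whole ball of radius comparable to `t`, so the
-- supremum over `y` costs only the ratio of volumes `(1 + |x - y|/t)^n`, which the weight absorbs.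
theorem exists_tangentialMax_rpow_le_hlMax (hψ : IsMollifier ψ) {N : ℕ} {q : ℝ} (hq : 0 ≤ q)
    (hN : Module.finrank ℝ E ≤ N * q) :
    ∃ C : ℝ≥0∞, C ≠ ⊤ ∧ ∀ f : E → F, Continuous f → ∀ B, (∀ z, ‖f z‖ ≤ B) → ∀ x,
      tangentialMax N ψ f x ^ q ≤ C * hlMax (fun y => radialMax ψ f y ^ q) x := by
  obtain ⟨δ, hδ0, hδ1, hlower⟩ := exists_forall_mem_ball_le_norm_scaledConv (F := F) hψ N
  refine ⟨ENNReal.ofReal (4 ^ q * δ⁻¹ ^ Module.finrank ℝ E), ofReal_ne_top,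
    fun f hf B hB x => ?_⟩
  have hfin := tangentialMax_ne_top N hψ.contDiff.continuous hψ.hasCompactSupport hB x
  obtain ⟨y, t, ht, hyt⟩ := hlower f hf B hB x
  set τ := (tangentialMax N ψ f x).toReal
  set L := 1 + ‖x - y‖ / t with hL
  have hL1 : 1 ≤ L := le_add_of_nonneg_right (by positivity)
  set M := hlMax (fun y => radialMax ψ f y ^ q) x
  have hball : ENNReal.ofReal (τ / 4 * L ^ N) ^ q ≤
      ENNReal.ofReal ((1 + ‖x - y‖ / (δ * t)) ^ Module.finrank ℝ E) * M :=
    le_mul_hlMax_of_forall_mem_ball_le (by positivity) (fun z hz => ENNReal.rpow_le_rpow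
      ((ofReal_le_ofReal (hyt z hz)).trans (ofReal_norm_scaledConv_le_radialMax ψ f ht z)) hq) x
  have hratio : 1 + ‖x - y‖ / (δ * t) ≤ δ⁻¹ * L := by
    rw [hL, mul_add, mul_one, show ‖x - y‖ / (δ * t) = δ⁻¹ * (‖x - y‖ / t) by field_simp]
    gcongr
    exact (one_le_inv₀ hδ0).2 hδ1
  have hweight : L ^ Module.finrank ℝ E * τ ^ q ≤ 4 ^ q * (τ / 4 * L ^ N) ^ q := by
    rw [← Real.mul_rpow (by positivity) (by positivity), ← mul_assoc,
      mul_div_cancel₀ _ four_ne_zero]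
    exact pow_mul_rpow_le_mul_pow_rpow toReal_nonneg hL1 hN
  refine (ENNReal.mul_le_mul_iff_right (a := ENNReal.ofReal (L ^ Module.finrank ℝ E))
    (by positivity) ofReal_ne_top).1 ?_
  calc ENNReal.ofReal (L ^ Module.finrank ℝ E) * tangentialMax N ψ f x ^ q
    _ = ENNReal.ofReal (L ^ Module.finrank ℝ E * τ ^ q) := by
      rw [ofReal_mul (by positivity), ← ofReal_rpow_of_nonneg toReal_nonneg hq,
        ofReal_toReal hfin]
    _ ≤ ENNReal.ofReal (4 ^ q) * ENNReal.ofReal (τ / 4 * L ^ N) ^ q := by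
      rw [ofReal_rpow_of_nonneg (by positivity) hq, ← ofReal_mul (by positivity)]
      exact ofReal_le_ofReal hweight
    _ ≤ ENNReal.ofReal (4 ^ q) * (ENNReal.ofReal ((δ⁻¹ * L) ^ Module.finrank ℝ E) * M) := by
      gcongr
      exact hball.trans (by gcongr)
    _ = _ := by
      rw [mul_pow, ofReal_mul (by positivity), ofReal_mul (by positivity)]
      ring

theorem exists_lintegral_tangentialMax_rpow_le [Nontrivial E] (hψ : IsMollifier ψ) {N : ℕ} {p : ℝ}
    (hp : 0 < p) (hN : Module.finrank ℝ E < N * p) :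
    ∃ C : ℝ≥0∞, C ≠ ⊤ ∧ ∀ f : E → F, Continuous f → ∀ B, (∀ z, ‖f z‖ ≤ B) →
      ∫⁻ x, tangentialMax N ψ f x ^ p ≤ C * ∫⁻ x, radialMax ψ f x ^ p := by
  have hdim : 0 < (Module.finrank ℝ E : ℝ) := Nat.cast_pos.2 Module.finrank_pos
  have hN0 : 0 < (N : ℝ) := pos_of_mul_pos_left (hdim.trans hN) hp.le
  set q := Module.finrank ℝ E / (N : ℝ) with hq
  have hq0 : 0 < q := by positivity
  have hqp : q < p := by
    rw [hq, div_lt_iff₀ hN0, mul_comm]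
    exact hN
  obtain ⟨A, hA, hpt⟩ := exists_tangentialMax_rpow_le_hlMax (F := F) hψ hq0.le
    (mul_div_cancel₀ _ hN0.ne').ge
  obtain ⟨C, hC, hint⟩ := exists_setLIntegral_rpow_le_of_rpow_le_mul_hlMax (E := E) hq0 hqp hA
  refine ⟨C, hC, fun f hf B hB => ?_⟩
  simpa only [Measure.restrict_univ] using hint _ _ (lowerSemicontinuous_radialMax
    hψ.contDiff.continuous hψ.hasCompactSupport hf).measurable univ MeasurableSet.univ
    fun x _ => hpt f hf B hB x

end MaximalComparison

section HausdorffContent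

variable {n : ℕ} {A : Set (EuclideanSpace ℝ (Fin n))}

-- The unused indices of a sequential covering are filled with balls of total content at most `ε`.
theorem hContent_le_tsum {s : ℝ} (hs : 0 < s) {ι : Type*} [Countable ι]
    (z : ι → EuclideanSpace ℝ (Fin n)) {r : ι → ℝ} (hr : ∀ i, 0 < r i)
    (hA : A ⊆ ⋃ i, ball (z i) (r i)) : hContent n s A ≤ ∑' i, ENNReal.ofReal (r i ^ s) := by
  refine _root_.le_of_forall_pos_le_add fun ε hε => ?_
  obtain ⟨η, hη, hsum⟩ := ENNReal.exists_pos_sum_of_countable hε.ne' ℕ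
  obtain ⟨_⟩ := nonempty_denumerable (ι ⊕ ℕ)
  let e : ℕ ≃ ι ⊕ ℕ := (Denumerable.eqv (ι ⊕ ℕ)).symm
  let ρ : ι ⊕ ℕ → ℝ := Sum.elim r fun k => (η k : ℝ) ^ s⁻¹
  have hρ : ∀ i, 0 < ρ i := Sum.rec hr fun k => Real.rpow_pos_of_pos (hη k) _
  have hcover : A ⊆ ⋃ k, ball (Sum.elim z (fun _ => 0) (e k)) (ρ (e k)) := fun a ha => by
    obtain ⟨i, hi⟩ := mem_iUnion.1 (hA ha)
    refine mem_iUnion.2 ⟨e.symm (.inl i), ?_⟩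
    simpa [ρ] using hi
  calc hContent n s A
    _ ≤ ∑' k, ENNReal.ofReal (ρ (e k) ^ s) := sInf_le ⟨_, _, fun k => hρ _, hcover, rfl⟩
    _ = ∑' i, ENNReal.ofReal (ρ i ^ s) := e.tsum_eq fun i => ENNReal.ofReal (ρ i ^ s)
    _ = ∑' i, ENNReal.ofReal (r i ^ s) + ∑' k, (η k : ℝ≥0∞) := by
      rw [Summable.tsum_sum ENNReal.summable ENNReal.summable]
      simp [ρ, Real.rpow_inv_rpow, hs.ne']
    _ ≤ _ := by gcongr

theorem mul_hContent_le_setLIntegral_thickening {s : ℝ} (hs : 0 < s) {a : ℝ≥0∞}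
    {g : EuclideanSpace ℝ (Fin n) → ℝ≥0∞} {d : ℝ}
    (hA : ∀ z ∈ A, ∃ θ ∈ Ioc 0 d, a * ENNReal.ofReal (θ ^ s) ≤ ∫⁻ y in ball z θ, g y) :
    a * hContent n s A ≤ ENNReal.ofReal (4 ^ s) * ∫⁻ y in thickening d A, g y := by
  choose! θ hθ hle using hA
  obtain ⟨t, htA, htc, hcov, hsum⟩ := exists_countable_covering_enlargement_ball volume
    (t := (fun z => (z, θ z)) '' A) (forall_mem_image.2 fun z hz => (hθ z hz).1)
    (forall_mem_image.2 fun z hz => (hθ z hz).2) g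
  have := htc.to_subtype
  have hball : ∀ p ∈ t, 0 < p.2 ∧ a * ENNReal.ofReal (p.2 ^ s) ≤ ∫⁻ y in ball p.1 p.2, g y :=
    fun p hp => by
      obtain ⟨z, hz, rfl⟩ := htA hp
      exact ⟨(hθ z hz).1, hle z hz⟩
  have hcover : A ⊆ ⋃ p : t, ball p.1.1 (4 * p.1.2) := fun z hz => by
    have hz' := hcov (mem_biUnion (mem_image_of_mem _ hz) (mem_ball_self (hθ z hz).1))
    simpa only [iUnion_coe_set] using hz'
  have hthick : ⋃ p ∈ (fun z => (z, θ z)) '' A, ball p.1 p.2 ⊆ thickening d A :=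
    iUnion₂_subset (forall_mem_image.2 fun z hz =>
      (ball_subset_ball (hθ z hz).2).trans (ball_subset_thickening hz d))
  calc a * hContent n s A
    _ ≤ a * ∑' p : t, ENNReal.ofReal ((4 * p.1.2) ^ s) := by
      gcongr
      exact hContent_le_tsum hs _ (fun p => mul_pos four_pos (hball p p.2).1) hcover
    _ = ENNReal.ofReal (4 ^ s) * ∑' p : t, a * ENNReal.ofReal (p.1.2 ^ s) := by
      simp only [← ENNReal.tsum_mul_left]
      refine tsum_congr fun p => ?_
      rw [Real.mul_rpow four_pos.le (hball p p.2).1.le, ENNReal.ofReal_mul (by positivity),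
        mul_left_comm]
    _ ≤ ENNReal.ofReal (4 ^ s) * ∑' p : t, ∫⁻ y in ball p.1.1 p.1.2, g y := by
      gcongr with p
      exact (hball p p.2).2
    _ ≤ ENNReal.ofReal (4 ^ s) * ∫⁻ y in thickening d A, g y := by
      gcongr
      exact hsum.trans (lintegral_mono_set hthick)

theorem volume_ball_eq_ofReal_pow_mul (z : EuclideanSpace ℝ (Fin n)) {r : ℝ} (hr : 0 < r) :
    volume (ball z r) =
      ENNReal.ofReal (r ^ n) * volume (ball (0 : EuclideanSpace ℝ (Fin n)) 1) := by
  rw [Measure.addHaar_ball_of_pos _ _ hr, finrank_euclideanSpace_fin]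

-- The decay rate `(θ / d) ^ (-q)` makes the integral over `ball z θ` scale like the
-- `(n - q)`-dimensional content of the ball.
theorem mul_ofReal_rpow_le_setLIntegral_ball {q d θ : ℝ} (hd : 0 < d) (hθ : 0 < θ)
    {z : EuclideanSpace ℝ (Fin n)} {m : ℝ≥0∞} {g : EuclideanSpace ℝ (Fin n) → ℝ≥0∞}
    (hg : ∀ y ∈ ball z θ, m * ENNReal.ofReal ((θ / d) ^ (-q)) ≤ g y) :
    m * ENNReal.ofReal (d ^ q) * volume (ball (0 : EuclideanSpace ℝ (Fin n)) 1) *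
      ENNReal.ofReal (θ ^ (n - q)) ≤ ∫⁻ y in ball z θ, g y := by
  have hpow : d ^ q * θ ^ (n - q) = (θ / d) ^ (-q) * θ ^ n := by
    rw [Real.rpow_neg (by positivity), Real.div_rpow hθ.le hd.le, Real.rpow_sub hθ,
      Real.rpow_natCast]
    field_simp
  set v := volume (ball (0 : EuclideanSpace ℝ (Fin n)) 1)
  calc m * ENNReal.ofReal (d ^ q) * v * ENNReal.ofReal (θ ^ (n - q))
    _ = m * ENNReal.ofReal (d ^ q * θ ^ (n - q)) * v := by
      rw [ENNReal.ofReal_mul (by positivity)]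
      ring
    _ = ∫⁻ _ in ball z θ, m * ENNReal.ofReal ((θ / d) ^ (-q)) := by
      rw [setLIntegral_const, volume_ball_eq_ofReal_pow_mul z hθ, hpow,
        ENNReal.ofReal_mul (by positivity)]
      ring
    _ ≤ ∫⁻ y in ball z θ, g y := setLIntegral_mono' measurableSet_ball hg

theorem mul_le_mul_hlMax_of_le_hContent {q c d : ℝ} (hq : q < n) (hd : 0 < d)
    {x : EuclideanSpace ℝ (Fin n)} (hAx : A ⊆ ball x (2 * d))
    (hcontent : ENNReal.ofReal (c * d ^ (n - q)) ≤ hContent n (n - q) A) {m : ℝ≥0∞}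
    {g : EuclideanSpace ℝ (Fin n) → ℝ≥0∞}
    (hg : ∀ z ∈ A, ∃ θ ∈ Ioo 0 d, ∀ y ∈ ball z θ, m * ENNReal.ofReal ((θ / d) ^ (-q)) ≤ g y) :
    ENNReal.ofReal c * m ≤ ENNReal.ofReal (4 ^ (n - q) * 3 ^ n) * hlMax g x := by
  have hball : ∀ z ∈ A, ∃ θ ∈ Ioc 0 d, m * ENNReal.ofReal (d ^ q) *
      volume (ball (0 : EuclideanSpace ℝ (Fin n)) 1) * ENNReal.ofReal (θ ^ (n - q)) ≤
        ∫⁻ y in ball z θ, g y := fun z hz =>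
    let ⟨θ, hθ, hle⟩ := hg z hz
    ⟨θ, Ioo_subset_Ioc_self hθ, mul_ofReal_rpow_le_setLIntegral_ball hd hθ.1 hle⟩
  have hthick : thickening d A ⊆ ball x (3 * d) := by
    rw [thickening_eq_biUnion_ball]
    refine iUnion₂_subset fun z hz => ball_subset_ball' ?_
    linarith [mem_ball.1 (hAx hz)]
  have hdim : d ^ n = d ^ q * d ^ (n - q) := by
    rw [← Real.rpow_add hd, add_sub_cancel, Real.rpow_natCast]
  have hvol := volume_ball_eq_ofReal_pow_mul x hd
  refine (ENNReal.mul_le_mul_iff_left (measure_ball_pos volume x hd).ne'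
    measure_ball_lt_top.ne).1 ?_
  calc ENNReal.ofReal c * m * volume (ball x d)
    _ = m * ENNReal.ofReal (d ^ q) * volume (ball (0 : EuclideanSpace ℝ (Fin n)) 1) *
        ENNReal.ofReal (c * d ^ (n - q)) := by
      rw [hvol, hdim, ENNReal.ofReal_mul (by positivity), ENNReal.ofReal_mul' (by positivity)]
      ring
    _ ≤ _ * hContent n (n - q) A := by gcongr
    _ ≤ ENNReal.ofReal (4 ^ (n - q)) * ∫⁻ y in thickening d A, g y :=
      mul_hContent_le_setLIntegral_thickening (sub_pos.2 hq) hball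
    _ ≤ ENNReal.ofReal (4 ^ (n - q)) * (volume (ball x (3 * d)) * hlMax g x) := by
      gcongr
      exact (lintegral_mono_set hthick).trans (setLIntegral_ball_le_mul_hlMax _
        (mem_ball_self (by positivity)) measure_ball_lt_top.ne)
    _ = ENNReal.ofReal (4 ^ (n - q) * 3 ^ n) * hlMax g x * volume (ball x d) := by
      rw [volume_ball_mul _ three_pos, finrank_euclideanSpace_fin,
        ENNReal.ofReal_mul (by positivity)]
      ring

end HausdorffContent

section GradientControl

theorem exists_abs_deriv_eq_mul_rpow {φ : ℝ → ℝ} {d δ : ℝ} (hd : 0 < d) (hδ : 0 < δ)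
    (hφ : Differentiable ℝ φ) (hφ0 : φ 0 = 0) :
    ∃ θ ∈ Ioo 0 d, |deriv φ θ| = δ * (|φ d| / d) * (θ / d) ^ (δ - 1) := by
  have hpow : ∀ t ∈ Ioo 0 d,
      HasDerivAt (fun t => (t / d) ^ δ) (d⁻¹ * δ * (t / d) ^ (δ - 1)) t := fun t ht => by
    simpa using ((hasDerivAt_id t).div_const d).rpow_const (.inl (div_pos ht.1 hd).ne')
  obtain ⟨θ, hθ, heq⟩ := exists_ratio_hasDerivAt_eq_ratio_slope φ _ hd
    hφ.continuous.continuousOn (fun t _ => (hφ t).hasDerivAt) (fun t => (t / d) ^ δ) _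
    ((continuous_id.div_const d).rpow_const fun _ => .inr hδ.le).continuousOn hpow
  have hθd : 0 ≤ (θ / d) ^ (δ - 1) := Real.rpow_nonneg (div_nonneg hθ.1.le hd.le) _
  refine ⟨θ, hθ, ?_⟩
  simp only [div_self hd.ne', Real.one_rpow, zero_div, Real.zero_rpow hδ.ne', hφ0, sub_zero,
    one_mul] at heq
  rw [heq, abs_mul, abs_of_nonneg (by positivity : 0 ≤ d⁻¹ * δ * (θ / d) ^ (δ - 1))]
  ring

theorem exists_norm_fderiv_le {E F : Type*} [NormedAddCommGroup E] [NormedSpace ℝ E]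
    [NormedAddCommGroup F] [NormedSpace ℝ F] {u : E → F} (hu : ContDiff ℝ 1 u)
    (huc : HasCompactSupport u) : ∃ B, ∀ z, ‖fderiv ℝ u z‖ ≤ B :=
  (huc.fderiv ℝ).exists_bound_of_continuous (hu.continuous_fderiv one_ne_zero)

variable {E : Type*} [NormedAddCommGroup E] [NormedSpace ℝ E] [MeasureSpace E] [BorelSpace E]
  [(volume : Measure E).IsAddHaarMeasure] [FiniteDimensional ℝ E] {ψ : E → ℝ}

theorem differentiable_scaledConv_scale (hψ : IsMollifier ψ) {u : E → ℝ} (hu : ContDiff ℝ 1 u)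
    (huc : HasCompactSupport u) (y : E) : Differentiable ℝ fun t => scaledConv ψ u t y := by
  obtain ⟨B, hB⟩ := exists_norm_fderiv_le hu huc
  exact fun t => (hasDerivAt_scaledConv_scale hψ.contDiff.continuous hψ.hasCompactSupport hu hB t
    y).differentiableAt

-- Differentiating in the scale turns `ψ_t * u` into averages of `∇u` against the kernels
-- `w ↦ w_i ψ(w)`.
theorem exists_abs_deriv_scaledConv_scale_le (hψ : IsMollifier ψ) (N : ℕ) :
    ∃ C, 0 ≤ C ∧ ∀ u : E → ℝ, ContDiff ℝ 1 u → HasCompactSupport u → ∀ x y t, 0 < t →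
      |deriv (fun s => scaledConv ψ u s y) t| ≤
        C * (tangentialMax N ψ (fderiv ℝ u) x).toReal * (1 + ‖x - y‖ / t) ^ N := by
  let b := Module.finBasis ℝ E
  choose C hC hCη using fun i => exists_norm_scaledConv_le_toReal_tangentialMax
    (F := E →L[ℝ] ℝ) hψ N
    ((b.coord i).toContinuousLinearMap.contDiff.mul hψ.contDiff) hψ.hasCompactSupport.mul_left
  refine ⟨∑ i, C i * ‖b i‖, Finset.sum_nonneg fun i _ => mul_nonneg (hC i) (norm_nonneg _),
    fun u hu huc x y t ht => ?_⟩
  obtain ⟨B, hB⟩ := exists_norm_fderiv_le hu huc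
  rw [(hasDerivAt_scaledConv_scale hψ.contDiff.continuous hψ.hasCompactSupport hu hB t y).deriv,
    integral_smul_fderiv_apply_neg_eq_sum b hψ.contDiff.continuous hψ.hasCompactSupport hu,
    abs_neg, Finset.sum_mul, Finset.sum_mul]
  refine (Finset.abs_sum_le_sum_abs _ _).trans (Finset.sum_le_sum fun i _ => ?_)
  refine ((scaledConv _ (fderiv ℝ u) t y).le_opNorm (b i)).trans ?_
  rw [mul_right_comm (C i), mul_right_comm]
  gcongr
  exact hCη i _ (hu.continuous_fderiv one_ne_zero) B hB x y t ht

theorem exists_abs_sub_scaledConv_le_toReal_tangentialMax (hψ : IsMollifier ψ) (N : ℕ) :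
    ∃ C, 0 ≤ C ∧ ∀ u : E → ℝ, ContDiff ℝ 1 u → HasCompactSupport u → ∀ x d, 0 < d →
      |u x - scaledConv ψ u d x| ≤ C * (tangentialMax N ψ (fderiv ℝ u) x).toReal * d := by
  obtain ⟨C, hC, hderiv⟩ := exists_abs_deriv_scaledConv_scale_le hψ N
  refine ⟨C, hC, fun u hu huc x d hd => ?_⟩
  have hscale := differentiable_scaledConv_scale hψ hu huc x
  obtain ⟨θ, hθ, hslope⟩ := exists_deriv_eq_slope _ hd hscale.continuous.continuousOn
    hscale.differentiableOn
  rw [scaledConv_zero hψ.integral_eq_one, sub_zero, eq_div_iff hd.ne'] at hslope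
  rw [abs_sub_comm, ← hslope, abs_mul, abs_of_pos hd]
  gcongr
  simpa using hderiv u hu huc x x θ hθ.1

theorem abs_scaledConv_sub_le_toReal_tangentialMax (hψ : IsMollifier ψ) (N : ℕ) {u : E → ℝ}
    (hu : ContDiff ℝ 1 u) (huc : HasCompactSupport u) {x z : E} {d : ℝ} (hd : 0 < d)
    (hz : z ∈ ball x (2 * d)) :
    |scaledConv ψ u d x - scaledConv ψ u d z| ≤
      2 * 3 ^ N * (tangentialMax N ψ (fderiv ℝ u) x).toReal * d := by
  have hψ' := hψ.contDiff.continuous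
  obtain ⟨B, hB⟩ := exists_norm_fderiv_le hu huc
  have hfin := tangentialMax_ne_top N hψ' hψ.hasCompactSupport hB x
  have hgrad : ∀ w ∈ ball x (2 * d), ‖fderiv ℝ (scaledConv ψ u d) w‖ ≤
      (tangentialMax N ψ (fderiv ℝ u) x).toReal * 3 ^ N := fun w hw => by
    rw [fderiv_scaledConv hψ' hu huc hd]
    refine (norm_scaledConv_le_toReal_tangentialMax hfin w hd).trans ?_
    gcongr
    have := (div_le_iff₀ hd).2 (mem_ball_iff_norm'.1 hw).le
    linarith
  refine ((convex_ball x (2 * d)).norm_image_sub_le_of_norm_fderiv_le (𝕜 := ℝ)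
    (fun w _ => (contDiff_scaledConv hψ' (m := 1) hu huc hd).differentiable one_ne_zero w) hgrad hz
    (mem_ball_self (by positivity))).trans ?_
  calc _ ≤ (tangentialMax N ψ (fderiv ℝ u) x).toReal * 3 ^ N * (2 * d) := by
        gcongr
        exact (mem_ball_iff_norm'.1 hz).le
    _ = _ := by ring

theorem exists_abs_div_le_or_half_le_abs_scaledConv (hψ : IsMollifier ψ) (N : ℕ) :
    ∃ K, 0 ≤ K ∧ ∀ u : E → ℝ, ContDiff ℝ 1 u → HasCompactSupport u → ∀ x d, 0 < d →
      |u x| / d ≤ K * (tangentialMax N ψ (fderiv ℝ u) x).toReal ∨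
        ∀ z ∈ ball x (2 * d), |u x| / d / 2 ≤ |scaledConv ψ u d z| / d := by
  obtain ⟨C, hC, hscale⟩ := exists_abs_sub_scaledConv_le_toReal_tangentialMax hψ N
  refine ⟨2 * (C + 2 * 3 ^ N), by positivity, fun u hu huc x d hd => or_iff_not_imp_left.2
    fun hlarge z hz => ?_⟩
  set τ := (tangentialMax N ψ (fderiv ℝ u) x).toReal
  have hdiff : |u x| - |scaledConv ψ u d z| ≤ (C + 2 * 3 ^ N) * τ * d :=
    calc |u x| - |scaledConv ψ u d z|
      _ ≤ |u x - scaledConv ψ u d z| := abs_sub_abs_le_abs_sub _ _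
      _ ≤ |u x - scaledConv ψ u d x| + |scaledConv ψ u d x - scaledConv ψ u d z| :=
        abs_sub_le _ _ _
      _ ≤ C * τ * d + 2 * 3 ^ N * τ * d := add_le_add (hscale u hu huc x d hd)
        (abs_scaledConv_sub_le_toReal_tangentialMax hψ N hu huc hd hz)
      _ = _ := by ring
  rw [not_le, lt_div_iff₀ hd] at hlarge
  rw [div_right_comm]
  gcongr
  linarith

theorem exists_rpow_le_toReal_tangentialMax_of_eq_zero (hψ : IsMollifier ψ) (N : ℕ) {δ : ℝ}
    (hδ : 0 < δ) :
    ∃ κ, 0 < κ ∧ ∀ u : E → ℝ, ContDiff ℝ 1 u → HasCompactSupport u → ∀ z, u z = 0 → ∀ d, 0 < d →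
      ∃ θ ∈ Ioo 0 d, ∀ y ∈ ball z θ, κ * (|scaledConv ψ u d z| / d) * (θ / d) ^ (δ - 1) ≤
        (tangentialMax N ψ (fderiv ℝ u) y).toReal := by
  obtain ⟨C, hC, hderiv⟩ := exists_abs_deriv_scaledConv_scale_le hψ N
  refine ⟨δ / (C * 2 ^ N + 1), by positivity, fun u hu huc z hz d hd => ?_⟩
  obtain ⟨θ, hθ, heq⟩ := exists_abs_deriv_eq_mul_rpow hd hδ
    (differentiable_scaledConv_scale hψ hu huc z)
    ((scaledConv_zero hψ.integral_eq_one u z).trans hz)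
  refine ⟨θ, hθ, fun y hy => ?_⟩
  set τ := (tangentialMax N ψ (fderiv ℝ u) y).toReal
  have hτ : 0 ≤ τ := toReal_nonneg
  have hle : δ * (|scaledConv ψ u d z| / d) * (θ / d) ^ (δ - 1) ≤ τ * (C * 2 ^ N + 1) :=
    calc _ ≤ C * τ * (1 + ‖y - z‖ / θ) ^ N := heq ▸ hderiv u hu huc y z θ hθ.1
      _ ≤ C * τ * 2 ^ N := by
        have hθ0 := hθ.1
        have := (div_le_one hθ0).2 (mem_ball_iff_norm.1 hy).le
        gcongr
        linarith
      _ ≤ _ := by linarith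
  rw [div_mul_eq_mul_div, div_mul_eq_mul_div]
  exact (div_le_iff₀ (by positivity)).2 hle

theorem exists_mul_rpow_le_tangentialMax_rpow_of_eq_zero (hψ : IsMollifier ψ) (N : ℕ) {q r : ℝ}
    (hr : 0 < r) (hqr : q < r) :
    ∃ κ : ℝ, 0 < κ ∧ ∀ u : E → ℝ, ContDiff ℝ 1 u → HasCompactSupport u → ∀ z, u z = 0 →
      ∀ d, 0 < d → ∃ θ ∈ Ioo 0 d, ∀ y ∈ ball z θ,
        ENNReal.ofReal (κ * (|scaledConv ψ u d z| / d)) ^ r * ENNReal.ofReal ((θ / d) ^ (-q)) ≤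
          tangentialMax N ψ (fderiv ℝ u) y ^ r := by
  obtain ⟨κ, hκ, hloc⟩ := exists_rpow_le_toReal_tangentialMax_of_eq_zero hψ N
    (sub_pos.2 ((div_lt_one hr).2 hqr))
  refine ⟨κ, hκ, fun u hu huc z hz d hd => ?_⟩
  obtain ⟨θ, hθ, hle⟩ := hloc u hu huc z hz d hd
  have hθd : 0 < θ / d := div_pos hθ.1 hd
  have hexp : (θ / d) ^ (-q) = ((θ / d) ^ (1 - q / r - 1)) ^ r := by
    rw [← Real.rpow_mul hθd.le]
    congr 1
    field_simp
    ring
  refine ⟨θ, hθ, fun y hy => ?_⟩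
  rw [hexp, ← ENNReal.ofReal_rpow_of_pos (by positivity), ← ENNReal.mul_rpow_of_nonneg _ _ hr.le,
    ← ENNReal.ofReal_mul (by positivity)]
  exact ENNReal.rpow_le_rpow (ENNReal.ofReal_le_of_le_toReal (hle y hy)) hr.le

end GradientControl

section PointwiseHardy

variable {n : ℕ} {ψ : EuclideanSpace ℝ (Fin n) → ℝ}

theorem exists_rpow_le_mul_hlMax_of_le_abs_scaledConv (hψ : IsMollifier ψ) (N : ℕ) {q r c : ℝ}
    (hq : q < n) (hr : 0 < r) (hqr : q < r) (hc : 0 < c) :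
    ∃ C : ℝ≥0∞, C ≠ ⊤ ∧ ∀ u : EuclideanSpace ℝ (Fin n) → ℝ, ContDiff ℝ 1 u →
      HasCompactSupport u → ∀ (x : EuclideanSpace ℝ (Fin n)) (d l : ℝ), 0 < d →
      ∀ A ⊆ ball x (2 * d), (∀ z ∈ A, u z = 0) → (∀ z ∈ A, l ≤ |scaledConv ψ u d z| / d) →
      ENNReal.ofReal (c * d ^ (n - q)) ≤ hContent n (n - q) A →
      ENNReal.ofReal l ^ r ≤ C * hlMax (fun y => tangentialMax N ψ (fderiv ℝ u) y ^ r) x := by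
  obtain ⟨κ, hκ, hlow⟩ := exists_mul_rpow_le_tangentialMax_rpow_of_eq_zero hψ N hr hqr
  set a := ENNReal.ofReal c * ENNReal.ofReal κ ^ r
  have ha : a ≠ 0 := mul_ne_zero (ofReal_pos.2 hc).ne'
    (ENNReal.rpow_pos (ofReal_pos.2 hκ) ofReal_ne_top).ne'
  have ha' : a ≠ ⊤ := by finiteness
  refine ⟨a⁻¹ * ENNReal.ofReal (4 ^ (n - q) * 3 ^ n), by finiteness,
    fun u hu huc x d l hd A hAx hzero hl hcontent => ?_⟩
  rw [mul_assoc, ← ENNReal.mul_le_iff_le_inv ha ha']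
  have hgrad : ∀ z ∈ A, ∃ θ ∈ Ioo 0 d, ∀ y ∈ ball z θ,
      ENNReal.ofReal (κ * l) ^ r * ENNReal.ofReal ((θ / d) ^ (-q)) ≤
        tangentialMax N ψ (fderiv ℝ u) y ^ r := fun z hz => by
    obtain ⟨θ, hθ, hle⟩ := hlow u hu huc z (hzero z hz) d hd
    refine ⟨θ, hθ, fun y hy => le_trans ?_ (hle y hy)⟩
    gcongr
    exact hl z hz
  calc a * ENNReal.ofReal l ^ r
    _ = ENNReal.ofReal c * ENNReal.ofReal (κ * l) ^ r := by
      rw [ENNReal.ofReal_mul hκ.le, ENNReal.mul_rpow_of_nonneg _ _ hr.le, mul_assoc]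
    _ ≤ _ := mul_le_mul_hlMax_of_le_hContent hq hd hAx hcontent hgrad

-- Either `|u x| / d` is controlled by the tangential maximal function at `x`, or `ψ_d * u` is of
-- size `|u x|` on all of `A`, and then `∇u` has to be large near every point of `A`.
theorem exists_rpow_div_le_mul_hlMax_of_le_hContent (hψ : IsMollifier ψ) (N : ℕ) {q r c : ℝ}
    (hq : q < n) (hr : 0 < r) (hqr : q < r) (hc : 0 < c) :
    ∃ C : ℝ≥0∞, C ≠ ⊤ ∧ ∀ u : EuclideanSpace ℝ (Fin n) → ℝ, ContDiff ℝ 1 u →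
      HasCompactSupport u → ∀ (x : EuclideanSpace ℝ (Fin n)) (d : ℝ), 0 < d →
      ∀ A ⊆ ball x (2 * d), (∀ z ∈ A, u z = 0) →
      ENNReal.ofReal (c * d ^ (n - q)) ≤ hContent n (n - q) A →
      ENNReal.ofReal (|u x| / d) ^ r ≤
        C * hlMax (fun y => tangentialMax N ψ (fderiv ℝ u) y ^ r) x := by
  obtain ⟨K, hK, hdichotomy⟩ := exists_abs_div_le_or_half_le_abs_scaledConv hψ N
  obtain ⟨C, hC, hcontrol⟩ := exists_rpow_le_mul_hlMax_of_le_abs_scaledConv hψ N hq hr hqr hc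
  refine ⟨ENNReal.ofReal K ^ r + 2 ^ r * C, by finiteness,
    fun u hu huc x d hd A hAx hzero hcontent => ?_⟩
  rw [add_mul]
  rcases hdichotomy u hu huc x d hd with hsmall | hlarge
  · obtain ⟨B, hB⟩ := exists_norm_fderiv_le hu huc
    refine le_add_right ?_
    calc ENNReal.ofReal (|u x| / d) ^ r
      _ ≤ (ENNReal.ofReal K * tangentialMax N ψ (fderiv ℝ u) x) ^ r := by
        gcongr
        rw [← ENNReal.ofReal_toReal (tangentialMax_ne_top N hψ.contDiff.continuous
          hψ.hasCompactSupport hB x), ← ENNReal.ofReal_mul hK]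
        exact ENNReal.ofReal_le_ofReal hsmall
      _ = ENNReal.ofReal K ^ r * tangentialMax N ψ (fderiv ℝ u) x ^ r :=
        ENNReal.mul_rpow_of_nonneg _ _ hr.le
      _ ≤ _ := by
        gcongr
        exact le_hlMax (ENNReal.continuous_rpow_const.comp_lowerSemicontinuous
          (lowerSemicontinuous_tangentialMax N ψ _) (ENNReal.monotone_rpow_of_nonneg hr.le)) x
  · refine le_add_left ?_
    calc ENNReal.ofReal (|u x| / d) ^ r
      _ = 2 ^ r * ENNReal.ofReal (|u x| / d / 2) ^ r := by
        rw [← ENNReal.mul_rpow_of_nonneg _ _ hr.le, ← ENNReal.ofReal_ofNat,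
          ← ENNReal.ofReal_mul two_pos.le, mul_div_cancel₀ _ two_ne_zero]
      _ ≤ _ := by
        rw [mul_assoc]
        gcongr
        exact hcontrol u hu huc x d _ hd A hAx hzero (fun z hz => hlarge z (hAx hz)) hcontent

variable {Ω : Set (EuclideanSpace ℝ (Fin n))}

theorem exists_rpow_div_infDist_frontier_le_mul_hlMax (hψ : IsMollifier ψ) (N : ℕ) {q r c : ℝ}
    (hq : q < n) (hr : 0 < r) (hqr : q < r) (hc : 0 < c) (hΩ : IsOpen Ω) (hΩu : Ω ≠ univ)
    (hthick : ∀ x ∈ frontier Ω, ∀ r : ℝ, 0 < r →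
      ENNReal.ofReal (c * r ^ ((n : ℝ) - q)) ≤ hContent n ((n : ℝ) - q) (Ωᶜ ∩ ball x r)) :
    ∃ C : ℝ≥0∞, C ≠ ⊤ ∧ ∀ u : EuclideanSpace ℝ (Fin n) → ℝ, ContDiff ℝ 1 u →
      HasCompactSupport u → Function.support u ⊆ Ω → ∀ x ∈ Ω,
      ENNReal.ofReal (|u x| / infDist x (frontier Ω)) ^ r ≤
        C * hlMax (fun y => tangentialMax N ψ (fderiv ℝ u) y ^ r) x := by
  obtain ⟨C, hC, hpt⟩ := exists_rpow_div_le_mul_hlMax_of_le_hContent hψ N hq hr hqr hc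
  refine ⟨C, hC, fun u hu huc huΩ x hx => ?_⟩
  obtain ⟨x₀, hx₀, hdist⟩ := isClosed_frontier.exists_infDist_eq_dist
    (nonempty_frontier_iff.2 ⟨⟨x, hx⟩, hΩu⟩) x
  have hx₀Ω : x₀ ∉ Ω := (hΩ.frontier_eq ▸ hx₀).2
  have hd : 0 < dist x x₀ := dist_pos.2 (ne_of_mem_of_not_mem hx hx₀Ω)
  rw [hdist]
  refine hpt u hu huc x _ hd _ (fun z hz => ?_)
    (fun z hz => Function.notMem_support.1 (mt (@huΩ z) hz.1)) (hthick x₀ hx₀ _ hd)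
  rw [mem_ball]
  linarith [dist_triangle_right z x x₀, mem_ball.1 hz.2]

end PointwiseHardy

section HardyInequality

theorem sum_rpow_le_card_rpow_mul_sum_rpow {ι : Type*} (s : Finset ι) (f : ι → ℝ≥0∞) {p : ℝ}
    (hp : 0 < p) : (∑ i ∈ s, f i) ^ p ≤ (s.card : ℝ≥0∞) ^ p * ∑ i ∈ s, f i ^ p := by
  have hle : ∀ i ∈ s, f i ≤ (∑ i ∈ s, f i ^ p) ^ p⁻¹ := fun i hi =>
    (ENNReal.le_rpow_inv_iff hp).2
      (Finset.single_le_sum_of_canonicallyOrdered (f := fun i => f i ^ p) hi)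
  calc (∑ i ∈ s, f i) ^ p
    _ ≤ (s.card * (∑ i ∈ s, f i ^ p) ^ p⁻¹) ^ p := by
      gcongr
      exact (Finset.sum_le_card_nsmul s f _ hle).trans_eq (nsmul_eq_mul _ _)
    _ = _ := by
      rw [ENNReal.mul_rpow_of_nonneg _ _ hp.le, ENNReal.rpow_inv_rpow hp.ne']

variable {n : ℕ} {ψ : EuclideanSpace ℝ (Fin n) → ℝ}

theorem norm_le_sum_norm_apply_single (L : EuclideanSpace ℝ (Fin n) →L[ℝ] ℝ) :
    ‖L‖ ≤ ∑ j, ‖L (EuclideanSpace.single j 1)‖ := by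
  refine L.opNorm_le_bound (Finset.sum_nonneg fun _ _ => norm_nonneg _) fun w => ?_
  rw [← (EuclideanSpace.basisFun (Fin n) ℝ).sum_repr w, map_sum, Finset.sum_mul]
  refine (norm_sum_le _ _).trans (Finset.sum_le_sum fun j _ => ?_)
  rw [map_smul, norm_smul, mul_comm, (EuclideanSpace.basisFun (Fin n) ℝ).sum_repr,
    EuclideanSpace.basisFun_apply]
  gcongr
  exact PiLp.norm_apply_le w j

theorem convMax_eq_radialMax (ψ u : EuclideanSpace ℝ (Fin n) → ℝ) (j : Fin n) :
    convMax n ψ u j = radialMax ψ (pderivIdx n j u) := by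
  ext x
  rw [convMax, radialMax, iSup_subtype]
  congr! 6 with t ht
  simp only [scaledConv_eq_integral_dilation_sub _ _ ht, dilation, finrank_euclideanSpace_fin,
    smul_eq_mul, mul_comm]

theorem radialMax_fderiv_le_sum_convMax (hψ : IsMollifier ψ) {u : EuclideanSpace ℝ (Fin n) → ℝ}
    (hu : ContDiff ℝ 1 u) (x : EuclideanSpace ℝ (Fin n)) :
    radialMax ψ (fderiv ℝ u) x ≤ ∑ j, convMax n ψ u j x := by
  refine iSup₂_le fun t ht => ?_
  calc ENNReal.ofReal ‖scaledConv ψ (fderiv ℝ u) t x‖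
    _ ≤ ENNReal.ofReal (∑ j, ‖scaledConv ψ (pderivIdx n j u) t x‖) := by
      refine ofReal_le_ofReal ((norm_le_sum_norm_apply_single _).trans_eq ?_)
      simp only [scaledConv_fderiv_apply hψ.contDiff.continuous hψ.hasCompactSupport hu]
      rfl
    _ = ∑ j, ENNReal.ofReal ‖scaledConv ψ (pderivIdx n j u) t x‖ :=
      ofReal_sum_of_nonneg fun _ _ => norm_nonneg _
    _ ≤ ∑ j, convMax n ψ u j x := by
      gcongr with j
      rw [convMax_eq_radialMax]
      exact ofReal_norm_scaledConv_le_radialMax ψ _ ht x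

theorem measurable_convMax (hψ : IsMollifier ψ) {u : EuclideanSpace ℝ (Fin n) → ℝ}
    (hu : ContDiff ℝ 1 u) (j : Fin n) : Measurable (convMax n ψ u j) := by
  rw [convMax_eq_radialMax]
  exact (lowerSemicontinuous_radialMax hψ.contDiff.continuous hψ.hasCompactSupport
    ((hu.continuous_fderiv one_ne_zero).clm_apply continuous_const)).measurable

theorem lintegral_radialMax_fderiv_rpow_le (hψ : IsMollifier ψ)
    {u : EuclideanSpace ℝ (Fin n) → ℝ} (hu : ContDiff ℝ 1 u) {p : ℝ} (hp : 0 < p) :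
    ∫⁻ x, radialMax ψ (fderiv ℝ u) x ^ p ≤
      (n : ℝ≥0∞) ^ p * ∑ j, ∫⁻ x, convMax n ψ u j x ^ p := by
  have hmeas j : Measurable fun x => convMax n ψ u j x ^ p :=
    (measurable_convMax hψ hu j).pow_const p
  rw [← lintegral_finsetSum _ fun j _ => hmeas j,
    ← lintegral_const_mul _ (Finset.measurable_fun_sum _ fun j _ => hmeas j)]
  refine lintegral_mono fun x => ?_
  calc radialMax ψ (fderiv ℝ u) x ^ p
    _ ≤ (∑ j, convMax n ψ u j x) ^ p := by
      gcongr
      exact radialMax_fderiv_le_sum_convMax hψ hu x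
    _ ≤ _ := by
      simpa only [Finset.card_univ, Fintype.card_fin] using
        sum_rpow_le_card_rpow_mul_sum_rpow Finset.univ (convMax n ψ u · x) hp

theorem exists_setLIntegral_rpow_div_infDist_frontier_le (hψ : IsMollifier ψ) (N : ℕ)
    {q p c : ℝ} (hq0 : 0 < q) (hqn : q < n) (hqp : q < p) (hc : 0 < c)
    {Ω : Set (EuclideanSpace ℝ (Fin n))} (hΩ : IsOpen Ω) (hΩu : Ω ≠ univ)
    (hthick : ∀ x ∈ frontier Ω, ∀ r : ℝ, 0 < r →
      ENNReal.ofReal (c * r ^ ((n : ℝ) - q)) ≤ hContent n ((n : ℝ) - q) (Ωᶜ ∩ ball x r)) :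
    ∃ C : ℝ≥0∞, C ≠ ⊤ ∧ ∀ u : EuclideanSpace ℝ (Fin n) → ℝ, ContDiff ℝ 1 u →
      HasCompactSupport u → Function.support u ⊆ Ω →
      ∫⁻ x in Ω, ENNReal.ofReal (|u x| / infDist x (frontier Ω)) ^ p ≤
        C * ∫⁻ x, tangentialMax N ψ (fderiv ℝ u) x ^ p := by
  have : NeZero n := ⟨by rintro rfl; exact (hq0.trans hqn).ne' Nat.cast_zero⟩
  obtain ⟨r, hqr, hrp⟩ := exists_between hqp
  have hr : 0 < r := hq0.trans hqr
  obtain ⟨A, hA, hpt⟩ :=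
    exists_rpow_div_infDist_frontier_le_mul_hlMax hψ N hqn hr hqr hc hΩ hΩu hthick
  obtain ⟨C, hC, hint⟩ := exists_setLIntegral_rpow_le_of_rpow_le_mul_hlMax
    (E := EuclideanSpace ℝ (Fin n)) hr hrp hA
  exact ⟨C, hC, fun u hu huc huΩ => hint _ _ (lowerSemicontinuous_tangentialMax N ψ _).measurable
    Ω hΩ.measurableSet fun x hx => hpt u hu huc huΩ x hx⟩

end HardyInequality

theorem hardy_inequality_of_thick_complement_general {n : ℕ} {q p c : ℝ} (hq0 : 0 < q)
    (hqn : q < n) (hqp : q < p) {ψ : EuclideanSpace ℝ (Fin n) → ℝ} (hψ : IsMollifier ψ)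
    {Ω : Set (EuclideanSpace ℝ (Fin n))} (hΩ : IsOpen Ω) (hΩu : Ω ≠ univ) (hc : 0 < c)
    (hthick : ∀ x ∈ frontier Ω, ∀ r : ℝ, 0 < r →
      ENNReal.ofReal (c * r ^ ((n : ℝ) - q)) ≤ hContent n ((n : ℝ) - q) (Ωᶜ ∩ ball x r)) :
    ∃ C : ℝ≥0∞, C ≠ ⊤ ∧
      ∀ u : EuclideanSpace ℝ (Fin n) → ℝ,
        ContDiff ℝ 1 u → HasCompactSupport u → Function.support u ⊆ Ω →
        ∫⁻ x in Ω, ENNReal.ofReal (|u x| / infDist x (frontier Ω)) ^ p ≤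
          C * ∑ j : Fin n, ∫⁻ x, convMax n ψ u j x ^ p := by
  have : NeZero n := ⟨by rintro rfl; exact (hq0.trans hqn).ne' Nat.cast_zero⟩
  have hp : 0 < p := hq0.trans hqp
  obtain ⟨N, hN⟩ := exists_nat_gt (n / p)
  obtain ⟨A, hA, hhardy⟩ :=
    exists_setLIntegral_rpow_div_infDist_frontier_le hψ N hq0 hqn hqp hc hΩ hΩu hthick
  obtain ⟨D, hD, htangential⟩ := exists_lintegral_tangentialMax_rpow_le
    (F := EuclideanSpace ℝ (Fin n) →L[ℝ] ℝ) hψ (N := N) hp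
    (by simpa using (div_lt_iff₀ hp).1 hN)
  refine ⟨A * (D * n ^ p), by finiteness, fun u hu huc huΩ => ?_⟩
  obtain ⟨B, hB⟩ := exists_norm_fderiv_le hu huc
  calc ∫⁻ x in Ω, ENNReal.ofReal (|u x| / infDist x (frontier Ω)) ^ p
    _ ≤ A * ∫⁻ x, tangentialMax N ψ (fderiv ℝ u) x ^ p := hhardy u hu huc huΩ
    _ ≤ A * (D * ∫⁻ x, radialMax ψ (fderiv ℝ u) x ^ p) := by
      gcongr
      exact htangential _ (hu.continuous_fderiv one_ne_zero) B hB
    _ ≤ A * (D * (n ^ p * ∑ j : Fin n, ∫⁻ x, convMax n ψ u j x ^ p)) := by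
      gcongr
      exact lintegral_radialMax_fderiv_rpow_le hψ hu hp
    _ = _ := by ring

/-- **Theorem 4.4 (ii).** A bounded domain `Ω ⊆ ℝⁿ` whose complement is thick in the
sense of `(n-q)`-Hausdorff content for some `q < p` carries the `p`-Hardy inequality
for Hardy–Sobolev functions, `n/(n+1) < q < p ≤ 1`. -/
theorem hardy_inequality_of_thick_complement
    (n : ℕ) (hn : 1 ≤ n) (q p : ℝ) (hq : (n : ℝ) / (n + 1) < q) (hqp : q < p)
    (hp : p ≤ 1)
    (ψ : EuclideanSpace ℝ (Fin n) → ℝ) (hψ : ContDiff ℝ (⊤ : ℕ∞) ψ)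
    (hψsupp : tsupport ψ ⊆ ball 0 1) (hψint : ∫ x, ψ x = 1)
    (Ω : Set (EuclideanSpace ℝ (Fin n))) (hΩo : IsOpen Ω) (hΩc : IsConnected Ω)
    (hΩb : Bornology.IsBounded Ω) (c : ℝ) (hc : 0 < c)
    (hthick : ∀ x ∉ Ω, ∀ r : ℝ, 0 < r →
      ENNReal.ofReal (c * r ^ ((n : ℝ) - q)) ≤ hContent n ((n : ℝ) - q) (Ωᶜ ∩ ball x r)) :
    ∃ C : ℝ≥0∞, C ≠ ⊤ ∧
      ∀ u : EuclideanSpace ℝ (Fin n) → ℝ,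
        ContDiff ℝ (⊤ : ℕ∞) u → HasCompactSupport u → tsupport u ⊆ Ω →
        ∫⁻ x in Ω, ENNReal.ofReal (|u x| / infDist x (frontier Ω)) ^ p ≤
          C * ∑ j : Fin n, ∫⁻ x, convMax n ψ u j x ^ p := by
  have : NeZero n := ⟨Nat.one_le_iff_ne_zero.1 hn⟩
  have hmollifier : IsMollifier ψ := ⟨hψ, .of_support_subset_isCompact (isCompact_closedBall 0 1)
    ((subset_tsupport ψ).trans (hψsupp.trans ball_subset_closedBall)), hψint⟩
  have hq0 : 0 < q := lt_of_le_of_lt (by positivity) hq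
  have hqn : q < n := (hqp.trans_le hp).trans_le (Nat.one_le_cast.2 hn)
  have hΩu : Ω ≠ univ := fun h => NormedSpace.unbounded_univ ℝ _ (h ▸ hΩb)
  obtain ⟨C, hC, hhardy⟩ := hardy_inequality_of_thick_complement_general hq0 hqn hqp hmollifier
    hΩo hΩu hc fun x hx => hthick x (hΩo.frontier_eq ▸ hx).2
  exact ⟨C, hC, fun u hu huc huΩ =>
    hhardy u (hu.of_le (by simp)) huc ((subset_tsupport u).trans huΩ)⟩
end
end

section
/- Let h : ℝ → [0,∞) be an integrable function which is even (h(−t) = h(t) for all t) and has support contained in [−2,2], and define u : ℝ → ℝ by u(x) = ∫_0^x h(t) dt. If g : ℝ → [0,∞] is a Hajlasz gradient of u on ℝ, then for almost every x > 0 one has |u(x)| ≤ x·(g(x) + g(−x)). In particular, if moreover g ∈ L¹(ℝ), then ∫_0^2 (u(x)/x) dx < ∞. -/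
open MeasureTheory Metric Set ENNReal NNReal

noncomputable section

/-- `g` is a Hajlasz gradient of `u` on `ℝ`: `g` is measurable, nonnegative, and off a
set of measure zero `|u x - u y| ≤ |x - y| (g x + g y)`. -/
def IsHajlaszGradientR (u g : ℝ → ℝ) : Prop :=
  Measurable g ∧ (∀ x, 0 ≤ g x) ∧
    ∃ E : Set ℝ, volume E = 0 ∧
      ∀ x ∉ E, ∀ y ∉ E, |u x - u y| ≤ |x - y| * (g x + g y)

theorem odd_intervalIntegral_of_even {E : Type*} [NormedAddCommGroup E] [NormedSpace ℝ E]
    {f : ℝ → E} (hf : f.Even) : Function.Odd fun x => ∫ t in (0 : ℝ)..x, f t := fun x =>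
  calc ∫ t in (0 : ℝ)..-x, f t
      = ∫ t in x..0, f (-t) := by rw [intervalIntegral.integral_comp_neg, neg_zero]
    _ = ∫ t in x..0, f t := by simp only [hf.eq]
    _ = -∫ t in (0 : ℝ)..x, f t := intervalIntegral.integral_symm 0 x

theorem setLIntegral_Ioi_zero_add_comp_neg {μ : Measure ℝ} [μ.IsNegInvariant] [NullSingletonClass μ]
    {f : ℝ → ℝ≥0∞} (hf : AEMeasurable f μ) :
    ∫⁻ x in Ioi 0, (f x + f (-x)) ∂μ = ∫⁻ x, f x ∂μ := by
  have reflect : ∫⁻ x in Ioi 0, f (-x) ∂μ = ∫⁻ x in Iio 0, f x ∂μ := by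
    simpa using (Measure.measurePreserving_neg μ).setLIntegral_comp_preimage_emb
      (MeasurableEquiv.neg ℝ).measurableEmbedding f (Iio 0)
  rw [lintegral_add_left' hf.restrict, reflect, setLIntegral_congr Iio_ae_eq_Iic, ← compl_Ioi,
    lintegral_add_compl f measurableSet_Ioi]

namespace IsHajlaszGradientR

variable {u g : ℝ → ℝ}

theorem ae_abs_sub_comp_le (hg : IsHajlaszGradientR u g) {φ : ℝ → ℝ}
    (hφ : Measure.QuasiMeasurePreserving φ) :
    ∀ᵐ x, |u x - u (φ x)| ≤ |x - φ x| * (g x + g (φ x)) := by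
  obtain ⟨-, -, E, hE, hle⟩ := hg
  have ae_notMem : ∀ᵐ x, x ∉ E := measure_eq_zero_iff_ae_notMem.mp hE
  filter_upwards [ae_notMem, hφ.ae ae_notMem] with x hx hφx
  exact hle x hx (φ x) hφx

-- Compare `u` at `x` and `-x`: the increment is `2 u(x)`, over a distance `2 |x|`.
theorem ae_abs_le_of_odd (hg : IsHajlaszGradientR u g) (hu : u.Odd) :
    ∀ᵐ x, |u x| ≤ |x| * (g x + g (-x)) := by
  filter_upwards [hg.ae_abs_sub_comp_le
    (Measure.measurePreserving_neg volume).quasiMeasurePreserving] with x hx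
  have double : 2 * |u x| ≤ 2 * (|x| * (g x + g (-x))) := by
    simpa only [hu.eq, sub_neg_eq_add, ← two_mul, abs_mul, abs_two, mul_assoc] using hx
  exact le_of_mul_le_mul_left double two_pos

theorem setLIntegral_abs_div_le_of_odd (hg : IsHajlaszGradientR u g) (hu : u.Odd) :
    ∫⁻ x in Ioi 0, ENNReal.ofReal (|u x| / x) ≤ ∫⁻ x, ENNReal.ofReal (g x) := by
  have pointwise : ∀ᵐ x ∂volume.restrict (Ioi 0),
      ENNReal.ofReal (|u x| / x) ≤ ENNReal.ofReal (g x) + ENNReal.ofReal (g (-x)) := by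
    filter_upwards [ae_restrict_of_ae (hg.ae_abs_le_of_odd hu),
      ae_restrict_mem measurableSet_Ioi] with x hle (hx : 0 < x)
    rw [abs_of_pos hx] at hle
    rw [← ENNReal.ofReal_add (hg.2.1 x) (hg.2.1 (-x))]
    exact ENNReal.ofReal_le_ofReal ((div_le_iff₀' hx).mpr hle)
  exact (lintegral_mono_ae pointwise).trans_eq
    (setLIntegral_Ioi_zero_add_comp_neg hg.1.ennreal_ofReal.aemeasurable)

end IsHajlaszGradientR

theorem hajlasz_gradient_forces_hardy_on_line_general {u g : ℝ → ℝ} (hu : u.Odd)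
    (hg : IsHajlaszGradientR u g) :
    (∀ᵐ x, |u x| ≤ |x| * (g x + g (-x))) ∧
      ∫⁻ x in Ioi 0, ENNReal.ofReal (|u x| / x) ≤ ∫⁻ x, ENNReal.ofReal (g x) :=
  ⟨hg.ae_abs_le_of_odd hu, hg.setLIntegral_abs_div_le_of_odd hu⟩

/-- **Example 4.1.** Let `h ∈ L¹(ℝ)` be nonnegative, even, supported in `[-2,2]`, and
`u(x) = ∫_0^x h`. Any Hajlasz gradient `g` of `u` satisfies `|u(x)| ≤ x (g(x) + g(-x))`
for a.e. `x > 0`; in particular if `g ∈ L¹(ℝ)` then `∫_0^2 u(x)/x dx < ∞`. -/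
theorem hajlasz_gradient_forces_hardy_on_line
    (h : ℝ → ℝ) (hint : Integrable h) (hpos : ∀ t, 0 ≤ h t)
    (heven : ∀ t, h (-t) = h t) (hsupp : Function.support h ⊆ Icc (-2 : ℝ) 2)
    (u : ℝ → ℝ) (hu : ∀ x, u x = ∫ t in (0 : ℝ)..x, h t)
    (g : ℝ → ℝ) (hg : IsHajlaszGradientR u g) :
    (∀ᵐ x ∂(volume : Measure ℝ), 0 < x → |u x| ≤ x * (g x + g (-x))) ∧
      ((∫⁻ x, ENNReal.ofReal (g x)) ≠ ⊤ →
        ∫⁻ x in Ioo (0 : ℝ) 2, ENNReal.ofReal (u x / x) ≠ ⊤) := by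
  have u_odd : u.Odd := funext hu ▸ odd_intervalIntegral_of_even heven
  obtain ⟨ae_le, hardy⟩ := hajlasz_gradient_forces_hardy_on_line_general u_odd hg
  refine ⟨ae_le.mono fun x hle hx => by rwa [abs_of_pos hx] at hle,
    fun g_fin => ne_top_of_le_ne_top g_fin ?_⟩
  calc ∫⁻ x in Ioo (0 : ℝ) 2, ENNReal.ofReal (u x / x)
      ≤ ∫⁻ x in Ioo (0 : ℝ) 2, ENNReal.ofReal (|u x| / x) :=
        setLIntegral_mono' measurableSet_Ioo fun x hx =>
          ENNReal.ofReal_le_ofReal (div_le_div_of_nonneg_right (le_abs_self _) hx.1.le)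
    _ ≤ ∫⁻ x in Ioi 0, ENNReal.ofReal (|u x| / x) := lintegral_mono_set Ioo_subset_Ioi_self
    _ ≤ ∫⁻ x, ENNReal.ofReal (g x) := hardy
end
end

section
/- Let n ≥ 1. There is a constant C = C(n) such that for every ball B ⊆ ℝⁿ of radius r, every u ∈ L¹(2B), and every Hajlasz gradient g of u on 2B, one has ⨍_B |u − u_B| dm ≤ C · r · ( ⨍_{2B} g^{n/(n+1)} dm )^{(n+1)/n}, where u_B = ⨍_B u dm, ⨍ denotes the average (the integral divided by the Lebesgue measure of the domain of integration), and 2B is the ball concentric with B of twice the radius. -/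
open MeasureTheory Metric Set ENNReal NNReal

noncomputable section

/-- `g` is a Hajlasz gradient of `u` on `U ⊆ ℝⁿ`: `g` is measurable, nonnegative, and
off a set of measure zero `|u x - u y| ≤ ‖x - y‖ (g x + g y)` for `x, y ∈ U`. -/
def IsHajlaszGradientOn (n : ℕ) (u g : EuclideanSpace ℝ (Fin n) → ℝ)
    (U : Set (EuclideanSpace ℝ (Fin n))) : Prop :=
  Measurable g ∧ (∀ x, 0 ≤ g x) ∧
    ∃ E : Set (EuclideanSpace ℝ (Fin n)), MeasureTheory.volume E = 0 ∧
      ∀ x ∈ U \ E, ∀ y ∈ U \ E, |u x - u y| ≤ ‖x - y‖ * (g x + g y)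

/-!
Let `p = s / (s + 1)`, where `s` is the dimension, and let `t ^ p` be a large multiple of the mean
of `g ^ p` over `2B`. A small ball has a point where `g ^ p` is at most its mean over that ball, so
a point `x` with `g x ≤ 2 ^ (k + 1) * t` has a neighbour `y` with `g y ≤ 2 ^ k * t` at distance
comparable to `τ ^ k * r`, where `τ = 2 ^ (-1 / (s + 1))`. The steps of such a chain stay in `2B`
and change `u` by geometrically growing amounts, the largest comparable to `r * t * (2 ^ p) ^ k`.
Hence `u x` differs from the value of `u` at a fixed point with `g ≤ t` by at most
`C * r * t * (1 + (g x / t) ^ p)`, whose mean over `B` is at most a multiple of `r * t`.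
-/

section Averages

variable {α F : Type*} {mα : MeasurableSpace α} {μ : Measure α}
  [NormedAddCommGroup F] [NormedSpace ℝ F] [CompleteSpace F]

theorem lintegral_enorm_sub_integral_le_two_mul [IsProbabilityMeasure μ] {f : α → F}
    (hf : Integrable f μ) (c : F) :
    ∫⁻ y, ‖f y - ∫ z, f z ∂μ‖ₑ ∂μ ≤ 2 * ∫⁻ y, ‖f y - c‖ₑ ∂μ := by
  set m := ∫ z, f z ∂μ
  have norm_center_sub : ‖c - m‖ₑ ≤ ∫⁻ y, ‖f y - c‖ₑ ∂μ := by
    have : m - c = ∫ z, (f z - c) ∂μ := by simp [integral_sub hf (integrable_const c), m]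
    rw [← enorm_neg, neg_sub, this]
    exact enorm_integral_le_lintegral_enorm _
  calc ∫⁻ y, ‖f y - m‖ₑ ∂μ
      ≤ ∫⁻ y, (‖f y - c‖ₑ + ‖c - m‖ₑ) ∂μ := by
        refine lintegral_mono fun y => ?_
        simpa only [sub_add_sub_cancel] using enorm_add_le (f y - c) (c - m)
    _ = ∫⁻ y, ‖f y - c‖ₑ ∂μ + ‖c - m‖ₑ := by
        rw [lintegral_add_right _ measurable_const, lintegral_const, measure_univ, mul_one]
    _ ≤ 2 * ∫⁻ y, ‖f y - c‖ₑ ∂μ := by rw [two_mul]; gcongr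

theorem laverage_enorm_sub_average_le_two_mul [IsFiniteMeasure μ] {f : α → F}
    (hf : Integrable f μ) (c : F) :
    ⨍⁻ y, ‖f y - ⨍ z, f z ∂μ‖ₑ ∂μ ≤ 2 * ⨍⁻ y, ‖f y - c‖ₑ ∂μ := by
  rcases eq_zero_or_neZero μ with rfl | _
  · simp
  · exact lintegral_enorm_sub_integral_le_two_mul hf.to_average c

end Averages

section MeasureSpace

variable {α : Type*} {mα : MeasurableSpace α} {μ : Measure α} {U V S : Set α}

theorem laverage_const_mul {c : ℝ≥0∞} (hc : c ≠ ∞) (f : α → ℝ≥0∞) :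
    ⨍⁻ y, c * f y ∂μ = c * ⨍⁻ y, f y ∂μ :=
  lintegral_const_mul' c f hc

theorem laverage_const_add [IsFiniteMeasure μ] [NeZero μ] (c : ℝ≥0∞) (f : α → ℝ≥0∞) :
    ⨍⁻ y, (c + f y) ∂μ = c + ⨍⁻ y, f y ∂μ := by
  rw [laverage, lintegral_add_left measurable_const, ← laverage, ← laverage, laverage_const]

theorem mul_setLAverage_le_setLAverage_of_subset (hVU : V ⊆ U) (hU₀ : μ U ≠ 0) (hU : μ U ≠ ∞)
    {c : ℝ≥0∞} (hc : c * μ U ≤ μ V) (f : α → ℝ≥0∞) :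
    c * ⨍⁻ y in V, f y ∂μ ≤ ⨍⁻ y in U, f y ∂μ := by
  have inv_comparison : c * (μ V)⁻¹ ≤ (μ U)⁻¹ := by
    rw [← div_eq_mul_inv]
    refine ENNReal.div_le_of_le_mul ?_
    rw [← ENNReal.div_eq_inv_mul]
    exact (ENNReal.le_div_iff_mul_le (.inl hU₀) (.inl hU)).2 hc
  calc c * ⨍⁻ y in V, f y ∂μ = c * (μ V)⁻¹ * ∫⁻ y in V, f y ∂μ := by
        rw [setLAverage_eq, ENNReal.div_eq_inv_mul, mul_assoc]
    _ ≤ (μ U)⁻¹ * ∫⁻ y in U, f y ∂μ := by gcongr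
    _ = ⨍⁻ y in U, f y ∂μ := by rw [setLAverage_eq, ENNReal.div_eq_inv_mul]

theorem exists_mem_le_setLAverage_of_ae_mem (hV : MeasurableSet V) (hV₀ : μ V ≠ 0)
    (hVt : μ V ≠ ∞) {f : α → ℝ≥0∞} (hf : AEMeasurable f (μ.restrict V))
    (hS : ∀ᵐ y ∂μ.restrict V, y ∈ S) :
    ∃ y ∈ V, y ∈ S ∧ f y ≤ ⨍⁻ z in V, f z ∂μ := by
  have : IsFiniteMeasure (μ.restrict V) := isFiniteMeasure_restrict.2 hVt
  have null : μ.restrict V (V ∩ S)ᶜ = 0 := ae_iff.1 ((ae_restrict_mem hV).and hS)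
  obtain ⟨y, hy, hfy⟩ :=
    exists_notMem_null_le_laverage (mt Measure.restrict_eq_zero.1 hV₀) hf null
  rw [notMem_compl_iff] at hy
  exact ⟨y, hy.1, hy.2, hfy⟩

end MeasureSpace

theorem ennreal_rpow_pow_comm (x : ℝ≥0∞) (p : ℝ) (k : ℕ) : (x ^ p) ^ k = (x ^ k) ^ p := by
  rw [← ENNReal.rpow_natCast, ← ENNReal.rpow_mul, mul_comm p, ENNReal.rpow_mul,
    ENNReal.rpow_natCast]

theorem exists_le_two_pow_and_two_rpow_pow_le {p : ℝ} (hp : 0 ≤ p) {t : ℝ≥0∞} (ht : t ≠ ∞) :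
    ∃ k : ℕ, t ≤ 2 ^ k ∧ (2 ^ p) ^ k ≤ 1 + 2 ^ p * t ^ p := by
  rcases lt_or_ge t 1 with ht1 | ht1
  · exact ⟨0, by simpa using ht1.le, by simp⟩
  lift t to ℝ≥0 using ht
  obtain ⟨k, hk, htk⟩ := exists_nat_pow_near (ENNReal.one_le_coe_iff.1 ht1) (one_lt_two (α := ℝ≥0))
  refine ⟨k + 1, by exact_mod_cast htk.le, ?_⟩
  have hk' : (2 : ℝ≥0∞) ^ k ≤ t := by exact_mod_cast hk
  calc ((2 : ℝ≥0∞) ^ p) ^ (k + 1) = 2 ^ p * (2 ^ k) ^ p := by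
        rw [pow_succ', ennreal_rpow_pow_comm]
    _ ≤ 2 ^ p * (t : ℝ≥0∞) ^ p := by gcongr
    _ ≤ 1 + 2 ^ p * (t : ℝ≥0∞) ^ p := le_add_self

/-- The ratio `τ = 2 ^ (-1 / (s + 1))` of the radii of consecutive balls in the chain. It is chosen
so that `2 ^ (s / (s + 1))`, the growth of `g ^ (s / (s + 1))` when `g` doubles, is both the
reciprocal of the loss of volume `τ ^ s` and the growth `2 τ` of radius times gradient. -/
def chainRatio (s : ℝ) : ℝ := 2 ^ (-(1 / (s + 1)))

section ChainRatio

variable {s : ℝ}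

theorem chainRatio_pos : 0 < chainRatio s := by
  rw [chainRatio]
  positivity

theorem chainRatio_lt_one (hs : 0 < s) : chainRatio s < 1 := by
  refine Real.rpow_lt_one_of_one_lt_of_neg one_lt_two ?_
  rw [neg_lt_zero]
  positivity

theorem two_mul_chainRatio (hs : 0 < s) : 2 * chainRatio s = 2 ^ (s / (s + 1)) := by
  have exponent : s / (s + 1) = 1 + -(1 / (s + 1)) := by field_simp; ring
  rw [exponent, Real.rpow_add two_pos, Real.rpow_one, chainRatio]

theorem one_lt_two_mul_chainRatio (hs : 0 < s) : 1 < 2 * chainRatio s := by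
  rw [two_mul_chainRatio hs]
  exact Real.one_lt_rpow one_lt_two (by positivity)

theorem inv_chainRatio_rpow (hs : 0 < s) : (chainRatio s)⁻¹ ^ s = 2 * chainRatio s := by
  have exponent : -(-(1 / (s + 1))) * s = s / (s + 1) := by ring
  rw [two_mul_chainRatio hs, chainRatio, ← Real.rpow_neg two_pos.le, ← Real.rpow_mul two_pos.le,
    exponent]

theorem ofReal_two_mul_chainRatio (hs : 0 < s) :
    ENNReal.ofReal (2 * chainRatio s) = 2 ^ (s / (s + 1)) := by
  rw [two_mul_chainRatio hs, ← ENNReal.ofReal_rpow_of_pos two_pos, ENNReal.ofReal_ofNat]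

/-- The radius `(1 - τ) τ ^ k r` of the `k`-th ball of the chain. Its centre lies in
`B(x₀, (1 + τ ^ (k + 1)) r)`, so that the ball itself lies in `B(x₀, (1 + τ ^ k) r)`. -/
def chainRadius (s r : ℝ) (k : ℕ) : ℝ := r * (1 - chainRatio s) * chainRatio s ^ k

variable {r : ℝ}

theorem chainRadius_pos (hs : 0 < s) (hr : 0 < r) (k : ℕ) : 0 < chainRadius s r k :=
  mul_pos (mul_pos hr (sub_pos.2 (chainRatio_lt_one hs))) (pow_pos chainRatio_pos k)

theorem chainRadius_add (s r : ℝ) (k : ℕ) :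
    chainRadius s r k + r * (1 + chainRatio s ^ (k + 1)) = r * (1 + chainRatio s ^ k) := by
  rw [chainRadius]
  ring

theorem mul_one_add_chainRatio_pow_le (hs : 0 < s) (hr : 0 ≤ r) (k : ℕ) :
    r * (1 + chainRatio s ^ k) ≤ 2 * r := by
  have : chainRatio s ^ k ≤ 1 := pow_le_one₀ chainRatio_pos.le (chainRatio_lt_one hs).le
  nlinarith

theorem div_chainRadius_rpow (hs : 0 < s) (hr : 0 < r) (k : ℕ) :
    ((1 - chainRatio s) / 2 * (2 * r) / chainRadius s r k) ^ s = (2 * chainRatio s) ^ k := by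
  have hκ : 1 - chainRatio s ≠ 0 := (sub_pos.2 (chainRatio_lt_one hs)).ne'
  have ratio : (1 - chainRatio s) / 2 * (2 * r) / chainRadius s r k = (chainRatio s)⁻¹ ^ k := by
    rw [chainRadius, inv_pow]
    field_simp
  rw [ratio, ← Real.rpow_pow_comm (inv_nonneg.2 chainRatio_pos.le), inv_chainRatio_rpow hs]

/-- The constant `D` in the bound `D r t (2 τ) ^ k` for the oscillation of `u` along the first `k`
steps of a chain; `D ≥ 8` takes care of the last point, and `D * (2 τ) - D ≥ 3 (1 - τ)` of each
step. -/
def chainConst (s : ℝ) : ℝ := 8 / (2 * chainRatio s - 1)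

theorem eight_le_chainConst (hs : 0 < s) : 8 ≤ chainConst s := by
  have : chainRatio s < 1 := chainRatio_lt_one hs
  exact le_div_self (by norm_num) (sub_pos.2 (one_lt_two_mul_chainRatio hs)) (by linarith)

theorem three_mul_add_chainConst_le (hs : 0 < s) :
    3 * (1 - chainRatio s) + chainConst s ≤ chainConst s * (2 * chainRatio s) := by
  have : chainConst s * (2 * chainRatio s - 1) = 8 :=
    div_mul_cancel₀ _ (sub_pos.2 (one_lt_two_mul_chainRatio hs)).ne'
  linarith [chainRatio_pos (s := s)]

/-- The constant of the Poincaré inequality with relative lower volume bound `b (ρ / R) ^ s`. -/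
def hajlaszPoincareConst (s b : ℝ) : ℝ :=
  6 * chainConst s * (b * ((1 - chainRatio s) / 2) ^ s)⁻¹ ^ ((s + 1) / s)

theorem hajlaszPoincareConst_pos {b : ℝ} (hs : 0 < s) (hb : 0 < b) :
    0 < hajlaszPoincareConst s b := by
  have hκ : 0 < 1 - chainRatio s := sub_pos.2 (chainRatio_lt_one hs)
  have hD : 8 ≤ chainConst s := eight_le_chainConst hs
  rw [hajlaszPoincareConst]
  positivity

end ChainRatio

section MetricMeasureSpace

variable {X F : Type*} [PseudoMetricSpace X] [PseudoEMetricSpace F] {s b r : ℝ} {x₀ : X}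
  {u : X → F} {g : X → ℝ≥0∞} {t : ℝ≥0∞} {S : Set X}

/-- The pointwise inequality defining a Hajlasz gradient, on all of `S` and for gradients with
values in `[0, ∞]`. -/
def HajlaszInequalityOn (u : X → F) (g : X → ℝ≥0∞) (S : Set X) : Prop :=
  ∀ x ∈ S, ∀ y ∈ S, edist (u x) (u y) ≤ edist x y * (g x + g y)

theorem HajlaszInequalityOn.edist_le_of_dist_le (hu : HajlaszInequalityOn u g S) {x y : X}
    (hx : x ∈ S) (hy : y ∈ S) {ρ : ℝ} (hxy : dist x y ≤ ρ) {a a' : ℝ≥0∞} (hgx : g x ≤ a)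
    (hgy : g y ≤ a') : edist (u x) (u y) ≤ ENNReal.ofReal ρ * (a + a') := by
  refine (hu x hx y hy).trans ?_
  gcongr
  exact (edist_le_ofReal (dist_nonneg.trans hxy)).2 hxy

theorem HajlaszInequalityOn.edist_le_of_mem_ball (hu : HajlaszInequalityOn u g S) {R : ℝ} {x y : X}
    (hxS : x ∈ S) (hyS : y ∈ S) (hx : x ∈ ball x₀ R) (hy : y ∈ ball x₀ R) (hgx : g x ≤ t)
    (hgy : g y ≤ t) : edist (u x) (u y) ≤ ENNReal.ofReal (4 * R) * t := by
  have hR : 0 < R := pos_of_mem_ball hx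
  have dist_le : dist x y ≤ 2 * R := by
    linarith [dist_triangle_right x y x₀, mem_ball.1 hx, mem_ball.1 hy]
  refine (hu.edist_le_of_dist_le hxS hyS dist_le hgx hgy).trans_eq ?_
  rw [← two_mul, ← mul_assoc, ← ENNReal.ofReal_ofNat 2, ← ENNReal.ofReal_mul (by positivity)]
  congr 2
  ring

theorem HajlaszInequalityOn.edist_chain_step_le (hu : HajlaszInequalityOn u g S) (hs : 0 < s)
    (hr : 0 < r) {k : ℕ} {x y : X} (hx : x ∈ S) (hy : y ∈ S) (hyx : y ∈ ball x (chainRadius s r k))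
    (hgx : g x ≤ 2 ^ (k + 1) * t) (hgy : g y ≤ 2 ^ k * t) :
    edist (u x) (u y) ≤
      ENNReal.ofReal (3 * (1 - chainRatio s) * (r * (2 * chainRatio s) ^ k)) * t := by
  have hρ : 0 < chainRadius s r k := chainRadius_pos hs hr k
  refine (hu.edist_le_of_dist_le hx hy (mem_ball'.1 hyx).le hgx hgy).trans_eq ?_
  have levels : (2 : ℝ≥0∞) ^ (k + 1) * t + 2 ^ k * t = ENNReal.ofReal (3 * 2 ^ k) * t := by
    rw [ENNReal.ofReal_mul zero_le_three, ENNReal.ofReal_pow zero_le_two, ENNReal.ofReal_ofNat,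
      ENNReal.ofReal_ofNat]
    ring
  rw [levels, ← mul_assoc, ← ENNReal.ofReal_mul hρ.le, chainRadius]
  congr 2
  ring

variable [MeasurableSpace X] {μ : Measure X}

/-- The relative lower volume bound of dimension `s` in the ball `B(x₀, R)`: every smaller ball
centred in `B(x₀, R)` occupies at least the fraction `b (ρ / R) ^ s` of its volume. Doubling
measures satisfy it with `s` the doubling dimension. -/
structure HasVolumeLowerBound (μ : Measure X) (s b : ℝ) (x₀ : X) (R : ℝ) : Prop where
  measure_ne_zero : μ (ball x₀ R) ≠ 0
  measure_ne_top : μ (ball x₀ R) ≠ ∞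
  le_measure_ball : ∀ x ∈ ball x₀ R, ∀ ρ, 0 < ρ → ρ ≤ R →
    ENNReal.ofReal (b * (ρ / R) ^ s) * μ (ball x₀ R) ≤ μ (ball x ρ)

namespace HasVolumeLowerBound

variable {x : X} {R ρ : ℝ}

theorem measure_ball_ne_zero (h : HasVolumeLowerBound μ s b x₀ R) (hb : 0 < b)
    (hx : x ∈ ball x₀ R) (hρ : 0 < ρ) (hρR : ρ ≤ R) : μ (ball x ρ) ≠ 0 := by
  have hR : 0 < R := hρ.trans_le hρR
  have fraction_pos : 0 < ENNReal.ofReal (b * (ρ / R) ^ s) := ENNReal.ofReal_pos.2 (by positivity)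
  exact ((ENNReal.mul_pos fraction_pos.ne' h.measure_ne_zero).trans_le
    (h.le_measure_ball x hx ρ hρ hρR)).ne'

theorem setLAverage_ball_le (h : HasVolumeLowerBound μ s b x₀ R) (hb : 0 < b)
    (hx : x ∈ ball x₀ R) (hρ : 0 < ρ) (hρR : ρ ≤ R) (hsub : ball x ρ ⊆ ball x₀ R)
    {θ : ℝ} (hθ : 0 ≤ θ) {f : X → ℝ≥0∞} {a : ℝ≥0∞}
    (hf : ⨍⁻ y in ball x₀ R, f y ∂μ ≤ ENNReal.ofReal (b * θ ^ s) * a) :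
    ⨍⁻ y in ball x ρ, f y ∂μ ≤ ENNReal.ofReal ((θ * R / ρ) ^ s) * a := by
  have hR : 0 < R := hρ.trans_le hρR
  have fraction_pos : 0 < ENNReal.ofReal (b * (ρ / R) ^ s) := ENNReal.ofReal_pos.2 (by positivity)
  have fraction_mul : b * θ ^ s = b * (ρ / R) ^ s * (θ * R / ρ) ^ s := by
    rw [mul_assoc, ← Real.mul_rpow (by positivity) (by positivity)]
    congr 2
    field_simp
  refine (ENNReal.mul_le_mul_iff_right fraction_pos.ne' ENNReal.ofReal_ne_top).1 ?_
  calc ENNReal.ofReal (b * (ρ / R) ^ s) * ⨍⁻ y in ball x ρ, f y ∂μ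
      ≤ ⨍⁻ y in ball x₀ R, f y ∂μ :=
        mul_setLAverage_le_setLAverage_of_subset hsub h.measure_ne_zero h.measure_ne_top
          (h.le_measure_ball x hx ρ hρ hρR) f
    _ ≤ ENNReal.ofReal (b * θ ^ s) * a := hf
    _ = ENNReal.ofReal (b * (ρ / R) ^ s) * (ENNReal.ofReal ((θ * R / ρ) ^ s) * a) := by
        rw [fraction_mul, ENNReal.ofReal_mul (by positivity), mul_assoc]

end HasVolumeLowerBound

theorem hasVolumeLowerBound_addHaar {E : Type*} [NormedAddCommGroup E] [NormedSpace ℝ E]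
    [FiniteDimensional ℝ E] [MeasurableSpace E] [BorelSpace E] (μ : Measure E) [μ.IsAddHaarMeasure]
    (x₀ : E) {R : ℝ} (hR : 0 < R) :
    HasVolumeLowerBound μ (Module.finrank ℝ E) 1 x₀ R where
  measure_ne_zero := (measure_ball_pos μ x₀ hR).ne'
  measure_ne_top := measure_ball_lt_top.ne
  le_measure_ball x _ ρ hρ _ := by
    rw [Measure.addHaar_ball_of_pos μ x₀ hR, Measure.addHaar_ball_of_pos μ x hρ, ← mul_assoc,
      ← ENNReal.ofReal_mul (by positivity), one_mul, Real.rpow_natCast, ← mul_pow,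
      div_mul_cancel₀ _ hR.ne']

/-- `g` is a Hajlasz gradient of `u` on `U` in a metric measure space. It may take the value `∞`,
and the null set is independent of the pair of points. -/
structure HasHajlaszGradientOn (μ : Measure X) (u : X → F) (g : X → ℝ≥0∞)
    (U : Set X) : Prop where
  aemeasurable : AEMeasurable g (μ.restrict U)
  exists_null : ∃ E, μ E = 0 ∧ HajlaszInequalityOn u g (U \ E)

/-- `t` is an admissible starting level of the chain in `B(x₀, 2r)`: it dominates the
`s / (s + 1)`-mean of `g` with the constant that lets every ball `B(x, (1 - τ) τ ^ k r)` of the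
chain contain points where `g ≤ 2 ^ k t`. -/
def IsChainLevel (μ : Measure X) (s b : ℝ) (x₀ : X) (r : ℝ) (g : X → ℝ≥0∞) (t : ℝ≥0∞) : Prop :=
  ⨍⁻ y in ball x₀ (2 * r), g y ^ (s / (s + 1)) ∂μ ≤
    ENNReal.ofReal (b * ((1 - chainRatio s) / 2) ^ s) * t ^ (s / (s + 1))

theorem IsChainLevel.setLAverage_ball_le (ht : IsChainLevel μ s b x₀ r g t)
    (hμ : HasVolumeLowerBound μ s b x₀ (2 * r)) (hs : 0 < s) (hb : 0 < b) (hr : 0 < r) :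
    ⨍⁻ y in ball x₀ r, g y ^ (s / (s + 1)) ∂μ ≤ t ^ (s / (s + 1)) := by
  have hτ := chainRatio_pos (s := s)
  have hκ : 0 < 1 - chainRatio s := sub_pos.2 (chainRatio_lt_one hs)
  have hr2 : r ≤ 2 * r := by linarith
  refine (hμ.setLAverage_ball_le hb (mem_ball_self (by positivity)) hr hr2
    (ball_subset_ball hr2) (by positivity) ht).trans ?_
  have ratio : (1 - chainRatio s) / 2 * (2 * r) / r = 1 - chainRatio s := by field_simp
  rw [ratio]
  refine mul_le_of_le_one_left' (ENNReal.ofReal_le_one.2 ?_)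
  exact Real.rpow_le_one hκ.le (by linarith) hs.le

theorem IsChainLevel.setLAverage_div_rpow_le_one (ht : IsChainLevel μ s b x₀ r g t)
    (hμ : HasVolumeLowerBound μ s b x₀ (2 * r)) (hs : 0 < s) (hb : 0 < b) (hr : 0 < r)
    (ht₀ : t ≠ 0) :
    ⨍⁻ y in ball x₀ r, (g y / t) ^ (s / (s + 1)) ∂μ ≤ 1 := by
  have hp : 0 < s / (s + 1) := by positivity
  have inv_ne_top : (t ^ (s / (s + 1)))⁻¹ ≠ ∞ :=
    ENNReal.inv_ne_top.2 (mt (ENNReal.rpow_eq_zero_iff_of_pos hp).1 ht₀)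
  calc ⨍⁻ y in ball x₀ r, (g y / t) ^ (s / (s + 1)) ∂μ
      = (t ^ (s / (s + 1)))⁻¹ * ⨍⁻ y in ball x₀ r, g y ^ (s / (s + 1)) ∂μ := by
        simp only [ENNReal.div_rpow_of_nonneg _ _ hp.le,
          ENNReal.div_eq_inv_mul (b := t ^ (s / (s + 1))), laverage_const_mul inv_ne_top]
    _ ≤ (t ^ (s / (s + 1)))⁻¹ * t ^ (s / (s + 1)) := by
        gcongr
        exact ht.setLAverage_ball_le hμ hs hb hr
    _ ≤ 1 := ENNReal.inv_mul_le_one _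

theorem isChainLevel_of_div_rpow_le (hs : 0 < s) (hb : 0 < b)
    (ht : ((⨍⁻ y in ball x₀ (2 * r), g y ^ (s / (s + 1)) ∂μ) /
      ENNReal.ofReal (b * ((1 - chainRatio s) / 2) ^ s)) ^ ((s + 1) / s) ≤ t) :
    IsChainLevel μ s b x₀ r g t := by
  have hκ : 0 < 1 - chainRatio s := sub_pos.2 (chainRatio_lt_one hs)
  have hc : 0 < ENNReal.ofReal (b * ((1 - chainRatio s) / 2) ^ s) :=
    ENNReal.ofReal_pos.2 (by positivity)
  rw [IsChainLevel, mul_comm (ENNReal.ofReal _), ← ENNReal.div_le_iff hc.ne' ENNReal.ofReal_ne_top,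
    ← ENNReal.rpow_inv_le_iff (by positivity), inv_div]
  exact ht

variable [OpensMeasurableSpace X]

theorem IsChainLevel.exists_mem_ball_le (ht : IsChainLevel μ s b x₀ r g t)
    (hμ : HasVolumeLowerBound μ s b x₀ (2 * r)) (hs : 0 < s) (hb : 0 < b) (hr : 0 < r)
    (hg : AEMeasurable g (μ.restrict (ball x₀ (2 * r))))
    (hS : ∀ᵐ y ∂μ.restrict (ball x₀ (2 * r)), y ∈ S) {k : ℕ} {x : X}
    (hx : x ∈ ball x₀ (r * (1 + chainRatio s ^ (k + 1)))) :
    ∃ y ∈ ball x (chainRadius s r k), y ∈ S ∧ g y ≤ 2 ^ k * t := by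
  have hρ : 0 < chainRadius s r k := chainRadius_pos hs hr k
  have hτ : 0 < chainRatio s ^ (k + 1) := pow_pos chainRatio_pos _
  have radius_le := mul_one_add_chainRatio_pow_le hs hr.le k
  have hρr : chainRadius s r k ≤ 2 * r := by
    nlinarith [chainRadius_add s r k]
  have hx2 : x ∈ ball x₀ (2 * r) :=
    ball_subset_ball (mul_one_add_chainRatio_pow_le hs hr.le (k + 1)) hx
  have hsub : ball x (chainRadius s r k) ⊆ ball x₀ (2 * r) :=
    ball_subset_ball' (by linarith [mem_ball.1 hx, chainRadius_add s r k])
  have average_le : ⨍⁻ y in ball x (chainRadius s r k), g y ^ (s / (s + 1)) ∂μ ≤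
      (2 ^ k * t) ^ (s / (s + 1)) := by
    have hκ : 0 < 1 - chainRatio s := sub_pos.2 (chainRatio_lt_one hs)
    refine (hμ.setLAverage_ball_le hb hx2 hρ hρr hsub (by positivity) ht).trans_eq ?_
    rw [div_chainRadius_rpow hs hr, ENNReal.ofReal_pow (by linarith [one_lt_two_mul_chainRatio hs]),
      ofReal_two_mul_chainRatio hs, ENNReal.mul_rpow_of_nonneg _ _ (by positivity),
      ennreal_rpow_pow_comm]
  obtain ⟨y, hy, hyS, hgy⟩ := exists_mem_le_setLAverage_of_ae_mem measurableSet_ball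
    (hμ.measure_ball_ne_zero hb hx2 hρ hρr) (measure_ne_top_of_subset hsub hμ.measure_ne_top)
    ((hg.pow_const (s / (s + 1))).mono_measure (Measure.restrict_mono_set μ hsub))
    (ae_restrict_of_ae_restrict_of_subset hsub hS)
  exact ⟨y, hy, hyS, (ENNReal.rpow_le_rpow_iff (by positivity)).1 (hgy.trans average_le)⟩

theorem IsChainLevel.edist_le_of_le_two_pow_mul (ht : IsChainLevel μ s b x₀ r g t)
    (hμ : HasVolumeLowerBound μ s b x₀ (2 * r)) (hs : 0 < s) (hb : 0 < b) (hr : 0 < r)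
    (hg : AEMeasurable g (μ.restrict (ball x₀ (2 * r))))
    (hS : ∀ᵐ y ∂μ.restrict (ball x₀ (2 * r)), y ∈ S) (hu : HajlaszInequalityOn u g S)
    {z : X} (hzS : z ∈ S) (hz : z ∈ ball x₀ (2 * r)) (hgz : g z ≤ t) {k : ℕ} {x : X} (hxS : x ∈ S)
    (hx : x ∈ ball x₀ (r * (1 + chainRatio s ^ k))) (hgx : g x ≤ 2 ^ k * t) :
    edist (u x) (u z) ≤ ENNReal.ofReal (chainConst s * (r * (2 * chainRatio s) ^ k)) * t := by
  have hD : 8 ≤ chainConst s := eight_le_chainConst hs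
  have hτ : 0 < chainRatio s := chainRatio_pos
  have hκ : 0 < 1 - chainRatio s := sub_pos.2 (chainRatio_lt_one hs)
  induction k generalizing x with
  | zero =>
    simp only [pow_zero, one_mul, mul_one] at hx hgx ⊢
    have hx2 : x ∈ ball x₀ (2 * r) := ball_subset_ball (by linarith) hx
    refine (hu.edist_le_of_mem_ball hxS hzS hx2 hz hgx hgz).trans ?_
    gcongr ENNReal.ofReal ?_ * t
    nlinarith
  | succ k ih =>
    obtain ⟨y, hyx, hyS, hgy⟩ := ht.exists_mem_ball_le hμ hs hb hr hg hS hx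
    have hy : y ∈ ball x₀ (r * (1 + chainRatio s ^ k)) :=
      ball_subset_ball' (by linarith [mem_ball.1 hx, chainRadius_add s r k]) hyx
    calc edist (u x) (u z) ≤ edist (u x) (u y) + edist (u y) (u z) := edist_triangle _ _ _
      _ ≤ ENNReal.ofReal (3 * (1 - chainRatio s) * (r * (2 * chainRatio s) ^ k)) * t +
            ENNReal.ofReal (chainConst s * (r * (2 * chainRatio s) ^ k)) * t :=
          add_le_add (hu.edist_chain_step_le hs hr hxS hyS hyx hgx hgy) (ih hyS hy hgy)
      _ = ENNReal.ofReal ((3 * (1 - chainRatio s) + chainConst s) *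
            (r * (2 * chainRatio s) ^ k)) * t := by
          rw [← add_mul, ← ENNReal.ofReal_add (by positivity) (by positivity), ← add_mul]
      _ ≤ ENNReal.ofReal (chainConst s * (2 * chainRatio s) *
            (r * (2 * chainRatio s) ^ k)) * t := by
          gcongr
          exact three_mul_add_chainConst_le hs
      _ = ENNReal.ofReal (chainConst s * (r * (2 * chainRatio s) ^ (k + 1))) * t := by
          congr 2
          ring

theorem IsChainLevel.edist_le_one_add_rpow (ht : IsChainLevel μ s b x₀ r g t)
    (hμ : HasVolumeLowerBound μ s b x₀ (2 * r)) (hs : 0 < s) (hb : 0 < b) (hr : 0 < r)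
    (hg : AEMeasurable g (μ.restrict (ball x₀ (2 * r))))
    (hS : ∀ᵐ y ∂μ.restrict (ball x₀ (2 * r)), y ∈ S) (hu : HajlaszInequalityOn u g S)
    (ht₀ : t ≠ 0) (ht' : t ≠ ∞)
    {z : X} (hzS : z ∈ S) (hz : z ∈ ball x₀ (2 * r)) (hgz : g z ≤ t) {x : X} (hxS : x ∈ S)
    (hx : x ∈ ball x₀ r) :
    edist (u x) (u z) ≤
      ENNReal.ofReal (chainConst s * r) * t * (1 + 2 * (g x / t) ^ (s / (s + 1))) := by
  have hD : 8 ≤ chainConst s := eight_le_chainConst hs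
  have hp : 0 < s / (s + 1) := by positivity
  have hp1 : s / (s + 1) ≤ 1 := (div_le_one (by positivity)).2 (by linarith)
  have hDr : 0 < ENNReal.ofReal (chainConst s * r) := ENNReal.ofReal_pos.2 (by positivity)
  rcases eq_or_ne (g x / t) ∞ with hgt | hgt
  · rw [hgt, ENNReal.top_rpow_of_pos hp, ENNReal.mul_top two_ne_zero, add_top,
      ENNReal.mul_top (mul_ne_zero hDr.ne' ht₀)]
    exact le_top
  obtain ⟨k, hgk, hk⟩ := exists_le_two_pow_and_two_rpow_pow_le hp.le hgt
  have hτk : 0 < chainRatio s ^ k := pow_pos chainRatio_pos k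
  have hxk : x ∈ ball x₀ (r * (1 + chainRatio s ^ k)) := ball_subset_ball (by nlinarith) hx
  calc edist (u x) (u z)
      ≤ ENNReal.ofReal (chainConst s * (r * (2 * chainRatio s) ^ k)) * t :=
        ht.edist_le_of_le_two_pow_mul hμ hs hb hr hg hS hu hzS hz hgz hxS hxk
          ((ENNReal.div_le_iff ht₀ ht').1 hgk)
    _ = ENNReal.ofReal (chainConst s * r) * t * (2 ^ (s / (s + 1))) ^ k := by
        rw [← mul_assoc, ENNReal.ofReal_mul (by positivity),
          ENNReal.ofReal_pow (by linarith [one_lt_two_mul_chainRatio hs]),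
          ofReal_two_mul_chainRatio hs, mul_right_comm]
    _ ≤ ENNReal.ofReal (chainConst s * r) * t *
          (1 + 2 ^ (s / (s + 1)) * (g x / t) ^ (s / (s + 1))) := by gcongr
    _ ≤ ENNReal.ofReal (chainConst s * r) * t * (1 + 2 * (g x / t) ^ (s / (s + 1))) := by
        gcongr
        simpa only [ENNReal.rpow_one] using ENNReal.rpow_le_rpow_of_exponent_le one_le_two hp1

theorem IsChainLevel.exists_setLAverage_edist_le (ht : IsChainLevel μ s b x₀ r g t)
    (hμ : HasVolumeLowerBound μ s b x₀ (2 * r)) (hs : 0 < s) (hb : 0 < b) (hr : 0 < r)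
    (hu : HasHajlaszGradientOn μ u g (ball x₀ (2 * r))) (ht₀ : t ≠ 0) (ht' : t ≠ ∞) :
    ∃ c, ⨍⁻ y in ball x₀ r, edist (u y) c ∂μ ≤
      3 * (ENNReal.ofReal (chainConst s * r) * t) := by
  obtain ⟨E, hE, hineq⟩ := hu.exists_null
  have hS : ∀ᵐ y ∂μ.restrict (ball x₀ (2 * r)), y ∈ ball x₀ (2 * r) \ E :=
    (ae_restrict_mem measurableSet_ball).and
      (ae_restrict_of_ae (measure_eq_zero_iff_ae_notMem.1 hE))
  have hball : ball x₀ r ⊆ ball x₀ (2 * r) := ball_subset_ball (by linarith)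
  obtain ⟨z, -, hzS, hgz⟩ := ht.exists_mem_ball_le (k := 0) hμ hs hb hr hu.aemeasurable hS
    (mem_ball_self (mul_pos hr (add_pos one_pos (pow_pos chainRatio_pos _))))
  rw [pow_zero, one_mul] at hgz
  have : IsFiniteMeasure (μ.restrict (ball x₀ r)) :=
    isFiniteMeasure_restrict.2 (measure_ne_top_of_subset hball hμ.measure_ne_top)
  have : NeZero (μ.restrict (ball x₀ r)) := ⟨mt Measure.restrict_eq_zero.1
    (hμ.measure_ball_ne_zero hb (mem_ball_self (by positivity)) hr (by linarith))⟩
  refine ⟨u z, ?_⟩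
  calc ⨍⁻ y in ball x₀ r, edist (u y) (u z) ∂μ
      ≤ ⨍⁻ y in ball x₀ r, ENNReal.ofReal (chainConst s * r) * t *
          (1 + 2 * (g y / t) ^ (s / (s + 1))) ∂μ := by
        refine laverage_mono_ae ?_
        filter_upwards [ae_restrict_mem measurableSet_ball,
          ae_restrict_of_ae_restrict_of_subset hball hS] with y hy hyS
        exact ht.edist_le_one_add_rpow hμ hs hb hr hu.aemeasurable hS hineq ht₀ ht' hzS hzS.1 hgz
          hyS hy
    _ = ENNReal.ofReal (chainConst s * r) * t *
          (1 + 2 * ⨍⁻ y in ball x₀ r, (g y / t) ^ (s / (s + 1)) ∂μ) := by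
        rw [laverage_const_mul (by finiteness), laverage_const_add, laverage_const_mul ofNat_ne_top]
    _ ≤ ENNReal.ofReal (chainConst s * r) * t * (1 + 2 * 1) := by
        gcongr
        exact ht.setLAverage_div_rpow_le_one hμ hs hb hr ht₀
    _ = 3 * (ENNReal.ofReal (chainConst s * r) * t) := by ring

end MetricMeasureSpace

section Poincare

variable {X F : Type*} [PseudoMetricSpace X] [MeasurableSpace X] [OpensMeasurableSpace X]
  {μ : Measure X} [NormedAddCommGroup F] [NormedSpace ℝ F] [CompleteSpace F]
  {s b r : ℝ} {x₀ : X} {u : X → F} {g : X → ℝ≥0∞}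

theorem IsChainLevel.setLAverage_enorm_sub_average_le {t : ℝ≥0∞} (ht : IsChainLevel μ s b x₀ r g t)
    (hμ : HasVolumeLowerBound μ s b x₀ (2 * r)) (hs : 0 < s) (hb : 0 < b) (hr : 0 < r)
    (hu : IntegrableOn u (ball x₀ r) μ) (hg : HasHajlaszGradientOn μ u g (ball x₀ (2 * r)))
    (ht₀ : t ≠ 0) (ht' : t ≠ ∞) :
    ⨍⁻ y in ball x₀ r, ‖u y - ⨍ z in ball x₀ r, u z ∂μ‖ₑ ∂μ ≤
      ENNReal.ofReal (6 * chainConst s * r) * t := by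
  obtain ⟨c, hc⟩ := ht.exists_setLAverage_edist_le hμ hs hb hr hg ht₀ ht'
  simp only [edist_eq_enorm_sub] at hc
  have : IsFiniteMeasure (μ.restrict (ball x₀ r)) := isFiniteMeasure_restrict.2
    (measure_ne_top_of_subset (ball_subset_ball (by linarith)) hμ.measure_ne_top)
  calc ⨍⁻ y in ball x₀ r, ‖u y - ⨍ z in ball x₀ r, u z ∂μ‖ₑ ∂μ
      ≤ 2 * ⨍⁻ y in ball x₀ r, ‖u y - c‖ₑ ∂μ := laverage_enorm_sub_average_le_two_mul hu c
    _ ≤ 2 * (3 * (ENNReal.ofReal (chainConst s * r) * t)) := by gcongr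
    _ = ENNReal.ofReal (6 * chainConst s * r) * t := by
        rw [mul_assoc 6, ENNReal.ofReal_mul (p := 6) (by norm_num), ENNReal.ofReal_ofNat]
        ring

theorem mean_oscillation_poincare_hajlasz_general (hμ : HasVolumeLowerBound μ s b x₀ (2 * r))
    (hs : 0 < s) (hb : 0 < b) (hr : 0 < r) (hu : IntegrableOn u (ball x₀ r) μ)
    (hg : HasHajlaszGradientOn μ u g (ball x₀ (2 * r))) :
    ⨍⁻ y in ball x₀ r, ‖u y - ⨍ z in ball x₀ r, u z ∂μ‖ₑ ∂μ ≤
      ENNReal.ofReal (hajlaszPoincareConst s b * r) *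
        (⨍⁻ y in ball x₀ (2 * r), g y ^ (s / (s + 1)) ∂μ) ^ ((s + 1) / s) := by
  set A := ⨍⁻ y in ball x₀ (2 * r), g y ^ (s / (s + 1)) ∂μ
  set c := b * ((1 - chainRatio s) / 2) ^ s with hc
  have hκ : 0 < 1 - chainRatio s := sub_pos.2 (chainRatio_lt_one hs)
  have hc₀ : 0 < c := by positivity
  have hD : 8 ≤ chainConst s := eight_le_chainConst hs
  have hM : 0 < ENNReal.ofReal (6 * chainConst s * r) := ENNReal.ofReal_pos.2 (by positivity)
  have const_eq : ENNReal.ofReal (hajlaszPoincareConst s b * r) * A ^ ((s + 1) / s) =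
      (A / ENNReal.ofReal c) ^ ((s + 1) / s) * ENNReal.ofReal (6 * chainConst s * r) := by
    rw [hajlaszPoincareConst, ← hc, mul_right_comm, ENNReal.ofReal_mul (by positivity),
      ← ENNReal.ofReal_rpow_of_pos (inv_pos.2 hc₀), ENNReal.ofReal_inv_of_pos hc₀,
      div_eq_mul_inv A, ENNReal.mul_rpow_of_nonneg _ _ (by positivity)]
    ring
  rw [const_eq]
  refine (ENNReal.div_le_iff hM.ne' ENNReal.ofReal_ne_top).1 (le_of_forall_gt_imp_ge_of_dense ?_)
  intro t hAt
  rcases eq_or_ne t ∞ with rfl | ht'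
  · exact le_top
  have level : IsChainLevel μ s b x₀ r g t := isChainLevel_of_div_rpow_le hs hb hAt.le
  refine ENNReal.div_le_of_le_mul' ?_
  exact level.setLAverage_enorm_sub_average_le hμ hs hb hr hu hg (ne_bot_of_gt hAt) ht'

end Poincare

theorem IsHajlaszGradientOn.hasHajlaszGradientOn {n : ℕ} {u g : EuclideanSpace ℝ (Fin n) → ℝ}
    {U : Set (EuclideanSpace ℝ (Fin n))} (h : IsHajlaszGradientOn n u g U) :
    HasHajlaszGradientOn volume u (fun x => ENNReal.ofReal (g x)) U where
  aemeasurable := h.1.ennreal_ofReal.aemeasurable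
  exists_null := by
    obtain ⟨-, hg, E, hE, hineq⟩ := h
    refine ⟨E, hE, fun x hx y hy => ?_⟩
    rw [← ENNReal.ofReal_add (hg x) (hg y), edist_dist, edist_dist,
      ← ENNReal.ofReal_mul dist_nonneg, Real.dist_eq, dist_eq_norm]
    exact ENNReal.ofReal_le_ofReal (hineq x hx y hy)

/-- **Inequality (2.60).** Mean-oscillation Poincaré inequality for Hajlasz gradients:
`⨍_B |u - u_B| ≤ C r (⨍_{2B} g^{n/(n+1)})^{(n+1)/n}`. -/
theorem mean_oscillation_poincare_hajlasz (n : ℕ) (hn : 1 ≤ n) :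
    ∃ C : ℝ, 0 < C ∧
      ∀ (x₀ : EuclideanSpace ℝ (Fin n)) (r : ℝ), 0 < r →
        ∀ u : EuclideanSpace ℝ (Fin n) → ℝ, IntegrableOn u (ball x₀ (2 * r)) →
          ∀ g : EuclideanSpace ℝ (Fin n) → ℝ,
            IsHajlaszGradientOn n u g (ball x₀ (2 * r)) →
            (volume (ball x₀ r))⁻¹ *
                ∫⁻ y in ball x₀ r, ENNReal.ofReal |u y - ⨍ z in ball x₀ r, u z| ≤
              ENNReal.ofReal (C * r) *
                ((volume (ball x₀ (2 * r)))⁻¹ *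
                    ∫⁻ y in ball x₀ (2 * r),
                      ENNReal.ofReal (g y) ^ ((n : ℝ) / (n + 1))) ^
                  ((n + 1 : ℝ) / n) := by
  refine ⟨hajlaszPoincareConst n 1, hajlaszPoincareConst_pos (by positivity) one_pos,
    fun x₀ r hr u hu g hg => ?_⟩
  have volume_bound := hasVolumeLowerBound_addHaar volume x₀ (by positivity : 0 < 2 * r)
  rw [finrank_euclideanSpace_fin] at volume_bound
  simpa only [setLAverage_eq, ENNReal.div_eq_inv_mul, Real.enorm_eq_ofReal_abs] using
    mean_oscillation_poincare_hajlasz_general volume_bound (by positivity) one_pos hr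
      (hu.mono_set (ball_subset_ball (by linarith))) hg.hasHajlaszGradientOn
end
end
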